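/- arXiv:1707.06726 — 2 statements merged into one kernel-verified Lean document; each statement's English description precedes it below -/
import Mathlib

section
/- Let n be a positive integer, λ_1,…,λ_n positive reals, τ > 0, and f_1,…,f_n : ℝ → ℝ continuous, with f_j satisfying positive feedback for 1 ≤ j ≤ n−1, f_n satisfying negative feedback, and f_n(x) ≤ M for some M > 0 and all x. Assume each f_j is differentiable in a neighborhood of 0 with derivative f_j′ Hölder continuous with some exponent α ∈ (0,1] there, and f_j′(0) ≠ 0. Set a = −f_1′(0)·f_2′(0)·⋯·f_n′(0) (so a > 0). If the characteristic equation (z+λ_1)(z+λ_2)⋯(z+λ_n) + a·e^{−τz} = 0 has no real roots, then every solution of the cyclic system oscillates about zero: for every solution x = (x_1,…,x_n) on [0,∞), every index j and every s ≥ 0, there exists t ≥ s with x_j(t) = 0. -/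
/-- A solution of the cyclic system with delay on `[T, ∞)` (0-indexed components
`x 0, …, x (n-1)`). -/
def IsCyclicSolution (n : ℕ) (lam : ℕ → ℝ) (τ : ℝ) (f : ℕ → ℝ → ℝ)
    (T : ℝ) (x : ℕ → ℝ → ℝ) : Prop :=
  ContinuousOn (x 0) (Set.Ici (T - τ)) ∧
  (∀ j < n, ContinuousOn (x j) (Set.Ici T)) ∧
  ∀ t : ℝ, T < t →
    (∀ j : ℕ, j + 1 < n →
      HasDerivAt (x j) (-lam j * x j t + f j (x (j + 1) t)) t) ∧
    HasDerivAt (x (n - 1)) (-lam (n - 1) * x (n - 1) t + f (n - 1) (x 0 (t - τ))) t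

open Set Filter Topology MeasureTheory

theorem shift_int (g : ℝ → ℝ) (T δ : ℝ) :
    IntegrableOn (fun t => g (t - δ)) (Ioi T) ↔ IntegrableOn g (Ioi (T - δ)) := by
  have h := (measurePreserving_sub_right volume δ).integrableOn_comp_preimage
    (MeasurableEquiv.subRight δ).measurableEmbedding (f := g) (s := Ioi (T - δ))
  rw [Set.preimage_sub_const_Ioi] at h
  simpa [Function.comp_def] using h

theorem shift_integral (g : ℝ → ℝ) (T δ : ℝ) :
    ∫ t in Ioi T, g (t - δ) = ∫ t in Ioi (T - δ), g t := by
  have h := (measurePreserving_sub_right volume δ).setIntegral_preimage_emb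
    (MeasurableEquiv.subRight δ).measurableEmbedding g (Ioi (T - δ))
  rw [Set.preimage_sub_const_Ioi] at h
  simpa using h

theorem intOn_of_filter {g : ℝ → ℝ} {T : ℝ} (hc : ContinuousOn g (Ici T))
    (h : IntegrableAtFilter g atTop volume) : IntegrableOn g (Ioi T) :=
  (integrableOn_Ici_iff_integrableAtFilter_atTop.2
    ⟨h, hc.locallyIntegrableOn measurableSet_Ici⟩).mono_set Ioi_subset_Ici_self

theorem filter_of_intOn {g : ℝ → ℝ} {T : ℝ} (h : IntegrableOn g (Ioi T)) :
    IntegrableAtFilter g atTop volume := ⟨_, Ioi_mem_atTop T, h⟩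

theorem not_intOn_of_lower {g : ℝ → ℝ} {T c : ℝ} (hc : 0 < c) (h : ∀ t, T < t → c ≤ g t) :
    ¬ IntegrableOn g (Ioi T) := by
  intro hg
  have : IntegrableOn (fun _ : ℝ => c) (Ioi T) := by
    refine Integrable.mono' hg aestronglyMeasurable_const ?_
    filter_upwards [ae_restrict_mem measurableSet_Ioi] with t ht
    rw [Real.norm_of_nonneg hc.le]; exact h t ht
  rw [integrableOn_const_iff] at this
  simp [hc.ne'] at this

theorem step_S {u v h : ℝ → ℝ} {lam C δ T0 s : ℝ} (hδ : 0 ≤ δ)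
    (hu : ∀ t, T0 ≤ t → 0 < u t) (hv : ∀ t, T0 ≤ t → 0 < v t)
    (hder : ∀ t, T0 ≤ t → HasDerivAt u (-lam * u t + h t) t)
    (hcont : ContinuousOn h (Ici T0)) (hvc : ContinuousOn v (Ici T0)) (hC : C ≠ 0)
    (hlim : ∀ ε > 0, ∀ᶠ t in atTop, |h t - C * v (t - δ)| ≤ ε * v (t - δ))
    (hInteg : IntegrableAtFilter (fun t => Real.exp (-s * t) * u t) atTop volume) :
    IntegrableAtFilter (fun t => Real.exp (-s * t) * v t) atTop volume := by
  have hC' : 0 < |C| := abs_pos.2 hC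
  have huc : ContinuousOn u (Ici T0) := fun t ht => (hder t ht).continuousAt.continuousWithinAt
  obtain ⟨T1, hT1, hb⟩ : ∃ T1, T0 + δ ≤ T1 ∧ ∀ t, T1 ≤ t →
      |h t - C * v (t - δ)| ≤ |C| / 2 * v (t - δ) := by
    obtain ⟨T, hT⟩ := eventually_atTop.1 (hlim (|C| / 2) (by positivity))
    exact ⟨max T (T0 + δ), le_max_right _ _, fun t ht => hT t (le_trans (le_max_left _ _) ht)⟩
  have hT01 : T0 ≤ T1 := by linarith
  obtain ⟨σ, hσ, hσC⟩ : ∃ σ : ℝ, |σ| = 1 ∧ σ * C = |C| := by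
    rcases lt_or_gt_of_ne hC with h | h
    · exact ⟨-1, by simp, by rw [abs_of_neg h]; ring⟩
    · exact ⟨1, by simp, by rw [abs_of_pos h]; ring⟩
  have hlow : ∀ t, T1 ≤ t → |C| / 2 * v (t - δ) ≤ σ * h t := by
    intro t ht
    have h1 : |σ * (h t - C * v (t - δ))| ≤ |C| / 2 * v (t - δ) := by
      rw [abs_mul, hσ, one_mul]; exact hb t ht
    have h2 := (abs_le.1 h1).1
    have h3 : σ * (h t - C * v (t - δ)) = σ * h t - |C| * v (t - δ) := by rw [← hσC]; ring
    rw [h3] at h2; linarith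
  have hvp : ∀ t, T1 ≤ t → 0 < v (t - δ) := fun t ht => hv _ (by linarith)
  have hInteg1 : IntegrableOn (fun t => Real.exp (-s * t) * u t) (Ioi T1) := by
    refine intOn_of_filter ?_ hInteg
    exact ContinuousOn.mul (by fun_prop) (huc.mono (Ici_subset_Ici.2 hT01))
  have hfreq : ∃ᶠ X in atTop, T1 ≤ X ∧ Real.exp (-s * X) * u X ≤ 1 := by
    intro hne
    obtain ⟨T2, hT2⟩ := eventually_atTop.1 hne
    refine not_intOn_of_lower (T := max T1 T2) one_pos (fun t ht => ?_)
      (hInteg1.mono_set (Ioi_subset_Ioi (le_max_left T1 T2)))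
    by_contra hlt
    exact hT2 t ((le_max_right _ _).trans ht.le) ⟨(le_max_left _ _).trans ht.le, (not_le.1 hlt).le⟩
  obtain ⟨X, hXt, hX⟩ := exists_seq_forall_of_frequently hfreq
  have hGc : ContinuousOn (fun t => Real.exp (-s * t) * (σ * h t)) (Ici T1) :=
    ContinuousOn.mul (by fun_prop)
      (continuousOn_const.mul (hcont.mono (Ici_subset_Ici.2 hT01)))
  have hUc : ContinuousOn (fun t => Real.exp (-s * t) * u t) (Ici T1) :=
    ContinuousOn.mul (by fun_prop) (huc.mono (Ici_subset_Ici.2 hT01))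
  have hG : IntegrableOn (fun t => Real.exp (-s * t) * (σ * h t)) (Ioi T1) := by
    refine integrableOn_Ioi_of_intervalIntegral_norm_bounded
      (1 + Real.exp (-s * T1) * u T1 + |s + lam| * ∫ t in Ioi T1, Real.exp (-s * t) * u t) T1
      (b := X) (l := atTop) (fun k => ?_) hXt (Eventually.of_forall fun k => ?_)
    · exact ((hGc.mono Icc_subset_Ici_self).integrableOn_Icc).mono_set Ioc_subset_Icc_self
    · obtain ⟨hk1, hk2⟩ := hX k
      have e1 : ∫ x in T1..X k, ‖Real.exp (-s * x) * (σ * h x)‖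
          = ∫ x in T1..X k, Real.exp (-s * x) * (σ * h x) := by
        refine intervalIntegral.integral_congr fun t ht => ?_
        rw [uIcc_of_le hk1] at ht
        refine Real.norm_of_nonneg (mul_nonneg (Real.exp_pos _).le ?_)
        have := hlow t ht.1
        have := hvp t ht.1
        have : 0 < |C| / 2 * v (t - δ) := by positivity
        linarith
      have i1 : IntervalIntegrable (fun x => Real.exp (-s * x) * (σ * h x)) volume T1 (X k) :=
        ContinuousOn.intervalIntegrable (hGc.mono (by rw [uIcc_of_le hk1]; exact Icc_subset_Ici_self))
      have i2 : IntervalIntegrable (fun x => Real.exp (-s * x) * u x) volume T1 (X k) :=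
        ContinuousOn.intervalIntegrable (hUc.mono (by rw [uIcc_of_le hk1]; exact Icc_subset_Ici_self))
      have e2 : ∫ x in T1..X k, (Real.exp (-s * x) * (σ * h x)
          - σ * (s + lam) * (Real.exp (-s * x) * u x))
          = σ * (Real.exp (-s * X k) * u (X k)) - σ * (Real.exp (-s * T1) * u T1) := by
        refine intervalIntegral.integral_eq_sub_of_hasDerivAt
          (f := fun x => σ * (Real.exp (-s * x) * u x)) (fun t ht => ?_) (i1.sub (i2.const_mul _))
        rw [uIcc_of_le hk1] at ht
        have h1 : HasDerivAt (fun x => Real.exp (-s * x)) (Real.exp (-s * t) * (-s * 1)) t :=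
          ((hasDerivAt_id t).const_mul (-s)).exp
        refine (((h1.mul (hder t (hT01.trans ht.1))).const_mul σ)).congr_deriv ?_
        ring
      rw [intervalIntegral.integral_sub i1 (i2.const_mul _), intervalIntegral.integral_const_mul] at e2
      have e3 : ∫ x in T1..X k, Real.exp (-s * x) * u x ≤ ∫ t in Ioi T1, Real.exp (-s * t) * u t := by
        rw [intervalIntegral.integral_of_le hk1]
        refine setIntegral_mono_set hInteg1 ?_ (Ioc_subset_Ioi_self.eventuallyLE)
        filter_upwards [ae_restrict_mem measurableSet_Ioi] with t ht
        exact (mul_pos (Real.exp_pos _) (hu t (hT01.trans (le_of_lt ht)))).le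
      have e4 : 0 ≤ ∫ x in T1..X k, Real.exp (-s * x) * u x := by
        refine intervalIntegral.integral_nonneg hk1 fun t ht => ?_
        exact (mul_pos (Real.exp_pos _) (hu t (hT01.trans ht.1))).le
      set J := ∫ x in T1..X k, Real.exp (-s * x) * u x
      have p1 : 0 < Real.exp (-s * X k) * u (X k) :=
        mul_pos (Real.exp_pos _) (hu _ (hT01.trans hk1))
      have p2 : 0 < Real.exp (-s * T1) * u T1 := mul_pos (Real.exp_pos _) (hu _ hT01)
      rw [e1]
      have q1 : σ * (Real.exp (-s * X k) * u (X k)) ≤ 1 := by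
        refine (le_abs_self _).trans ?_
        rw [abs_mul, hσ, one_mul, abs_of_pos p1]; exact hk2
      have q2 : -(σ * (Real.exp (-s * T1) * u T1)) ≤ Real.exp (-s * T1) * u T1 := by
        refine (neg_le_abs _).trans ?_
        rw [abs_mul, hσ, one_mul, abs_of_pos p2]
      have q3 : σ * (s + lam) * J ≤ |s + lam| * ∫ t in Ioi T1, Real.exp (-s * t) * u t := by
        refine (le_abs_self _).trans ?_
        rw [abs_mul, abs_mul, hσ, one_mul, abs_of_nonneg e4]
        exact mul_le_mul_of_nonneg_left e3 (abs_nonneg _)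
      linarith
  have hV : IntegrableOn (fun t => Real.exp (-s * (t - δ)) * v (t - δ)) (Ioi T1) := by
    refine Integrable.mono' (hG.const_mul (2 / |C| * Real.exp (s * δ))) ?_ ?_
    · refine ContinuousOn.aestronglyMeasurable ?_ measurableSet_Ioi
      refine ContinuousOn.mul (by fun_prop) (hvc.comp (by fun_prop) fun t ht => ?_)
      have : T1 < t := ht
      show T0 ≤ t - δ
      linarith
    · filter_upwards [ae_restrict_mem measurableSet_Ioi] with t ht
      have ht' : T1 ≤ t := le_of_lt ht
      have := hvp t ht'
      rw [Real.norm_of_nonneg (by positivity)]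
      have h2 := hlow t ht'
      have e : Real.exp (-s * (t - δ)) = Real.exp (s * δ) * Real.exp (-s * t) := by
        rw [← Real.exp_add]; ring_nf
      rw [e]
      have : v (t - δ) ≤ 2 / |C| * (σ * h t) := by
        rw [div_mul_eq_mul_div, le_div_iff₀ hC']; linarith
      calc Real.exp (s * δ) * Real.exp (-s * t) * v (t - δ)
          ≤ Real.exp (s * δ) * Real.exp (-s * t) * (2 / |C| * (σ * h t)) := by gcongr
        _ = _ := by ring
  exact filter_of_intOn ((shift_int (fun t => Real.exp (-s * t) * v t) T1 δ).1 hV)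

/-- The weight interpolating between `exp (-a t)` and `exp (-b t)`. -/
noncomputable def wt (a b η t : ℝ) : ℝ := (Real.exp (a * t) + η * Real.exp (b * t))⁻¹

theorem wt_den_pos {a b η t : ℝ} (hη : 0 < η) : 0 < Real.exp (a * t) + η * Real.exp (b * t) := by
  positivity

theorem wt_pos {a b η t : ℝ} (hη : 0 < η) : 0 < wt a b η t := inv_pos.2 (wt_den_pos hη)

theorem wt_cont {a b η : ℝ} (hη : 0 < η) : Continuous (wt a b η) := by
  unfold wt
  refine Continuous.inv₀ (by fun_prop) fun t => (wt_den_pos hη).ne'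

theorem wt_le_a {a b η t : ℝ} (hη : 0 < η) : wt a b η t ≤ Real.exp (-a * t) := by
  rw [neg_mul, Real.exp_neg, wt]
  refine inv_anti₀ (Real.exp_pos _) ?_
  have : 0 < η * Real.exp (b * t) := by positivity
  linarith

theorem wt_le_b {a b η t : ℝ} (hη : 0 < η) : wt a b η t ≤ η⁻¹ * Real.exp (-b * t) := by
  rw [neg_mul, Real.exp_neg, wt, ← mul_inv]
  refine inv_anti₀ (by positivity) ?_
  have := Real.exp_pos (a * t)
  linarith

theorem wt_ge {a b η t : ℝ} (hη : 0 < η) (h : η * Real.exp (b * t) ≤ Real.exp (a * t)) :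
    Real.exp (-a * t) / 2 ≤ wt a b η t := by
  have e : Real.exp (-a * t) / 2 = (2 * Real.exp (a * t))⁻¹ := by
    rw [neg_mul, Real.exp_neg, mul_inv]; ring
  rw [e, wt]
  exact inv_anti₀ (wt_den_pos hη) (by linarith)

theorem wt_deriv {a b η t : ℝ} (hη : 0 < η) (hab : a ≤ b) :
    ∃ θ, a ≤ θ ∧ θ ≤ b ∧ HasDerivAt (wt a b η) (-θ * wt a b η t) t := by
  have hd := wt_den_pos (a := a) (b := b) (t := t) hη
  have p1 := Real.exp_pos (a * t)
  have p2 : 0 < η * Real.exp (b * t) := by positivity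
  refine ⟨(a * Real.exp (a * t) + η * b * Real.exp (b * t)) /
    (Real.exp (a * t) + η * Real.exp (b * t)), ?_, ?_, ?_⟩
  · rw [le_div_iff₀ hd]; nlinarith
  · rw [div_le_iff₀ hd]; nlinarith
  · have h1 : HasDerivAt (fun x => Real.exp (a * x)) (Real.exp (a * t) * (a * 1)) t :=
      ((hasDerivAt_id t).const_mul a).exp
    have h2 : HasDerivAt (fun x => Real.exp (b * x)) (Real.exp (b * t) * (b * 1)) t :=
      ((hasDerivAt_id t).const_mul b).exp
    have h3 := (h1.add (h2.const_mul η)).inv hd.ne'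
    refine h3.congr_deriv ?_
    simp only [wt, Pi.add_apply]
    field_simp

theorem wt_shift {a b η t δ : ℝ} (hη : 0 < η) (hab : a ≤ b) (hδ : 0 ≤ δ) :
    Real.exp (-b * δ) * wt a b η (t - δ) ≤ wt a b η t ∧
    wt a b η t ≤ Real.exp (-a * δ) * wt a b η (t - δ) := by
  have ea : Real.exp (a * t) = Real.exp (a * δ) * Real.exp (a * (t - δ)) := by
    rw [← Real.exp_add]; ring_nf
  have eb : Real.exp (b * t) = Real.exp (b * δ) * Real.exp (b * (t - δ)) := by
    rw [← Real.exp_add]; ring_nf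
  have hab' : Real.exp (a * δ) ≤ Real.exp (b * δ) :=
    Real.exp_le_exp.2 (mul_le_mul_of_nonneg_right hab hδ)
  have p1 := Real.exp_pos (a * (t - δ))
  have p2 : 0 < η * Real.exp (b * (t - δ)) := by positivity
  have p3 := Real.exp_pos (a * δ)
  have p4 := Real.exp_pos (b * δ)
  constructor
  · rw [neg_mul, Real.exp_neg, wt, wt, ← mul_inv]
    refine inv_anti₀ (wt_den_pos hη) ?_
    rw [ea, eb]; nlinarith
  · rw [neg_mul, Real.exp_neg, wt, wt, ← mul_inv]
    refine inv_anti₀ (by positivity) ?_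
    rw [ea, eb]; nlinarith

theorem wt_int {u : ℝ → ℝ} {a b η T : ℝ} (hη : 0 < η) (hu : ∀ t, T ≤ t → 0 < u t)
    (huc : ContinuousOn u (Ici T))
    (hInteg : IntegrableAtFilter (fun t => Real.exp (-b * t) * u t) atTop volume) :
    IntegrableOn (fun t => wt a b η t * u t) (Ioi T) := by
  have h1 : IntegrableOn (fun t => Real.exp (-b * t) * u t) (Ioi T) :=
    intOn_of_filter (ContinuousOn.mul (by fun_prop) huc) hInteg
  refine Integrable.mono' (h1.const_mul η⁻¹) ?_ ?_
  · exact (ContinuousOn.mul (wt_cont hη).continuousOn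
      (huc.mono Ioi_subset_Ici_self)).aestronglyMeasurable measurableSet_Ioi
  · filter_upwards [ae_restrict_mem measurableSet_Ioi] with t ht
    have := hu t (le_of_lt ht)
    have hw := wt_pos (a := a) (b := b) (t := t) hη
    rw [Real.norm_of_nonneg (by positivity), ← mul_assoc]
    exact mul_le_mul_of_nonneg_right (wt_le_b hη) this.le

theorem wt_int_tendsto {u : ℝ → ℝ} {a b T : ℝ} (hu : ∀ t, T ≤ t → 0 < u t)
    (huc : ContinuousOn u (Ici T))
    (ha : ¬ IntegrableAtFilter (fun t => Real.exp (-a * t) * u t) atTop volume)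
    (hb : IntegrableAtFilter (fun t => Real.exp (-b * t) * u t) atTop volume) (hab : a ≤ b) :
    Tendsto (fun η => ∫ t in Ioi T, wt a b η t * u t) (𝓝[>] 0) atTop := by
  rw [tendsto_atTop]
  intro K
  have hUc : ContinuousOn (fun t => Real.exp (-a * t) * u t) (Ici T) :=
    ContinuousOn.mul (by fun_prop) huc
  obtain ⟨X, hX, hK⟩ : ∃ X, T ≤ X ∧ 2 * K < ∫ t in T..X, Real.exp (-a * t) * u t := by
    by_contra hcon
    push Not at hcon
    refine ha (filter_of_intOn (T := T) (integrableOn_Ioi_of_intervalIntegral_norm_bounded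
      (2 * K) T (b := id) (l := atTop) (fun k => ?_) tendsto_id ?_))
    · exact ((hUc.mono Icc_subset_Ici_self).integrableOn_Icc).mono_set Ioc_subset_Icc_self
    · filter_upwards [eventually_ge_atTop T] with X hX
      refine le_trans (le_of_eq ?_) (hcon X hX)
      refine intervalIntegral.integral_congr fun t ht => ?_
      simp only [id] at ht
      rw [uIcc_of_le hX] at ht
      exact Real.norm_of_nonneg (mul_pos (Real.exp_pos _) (hu t ht.1)).le
  have hη0 : ∀ᶠ η in 𝓝[>] (0 : ℝ), η * Real.exp ((b - a) * X) ≤ 1 := by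
    have : Tendsto (fun η : ℝ => η * Real.exp ((b - a) * X)) (𝓝[>] 0) (𝓝 (0 * Real.exp ((b - a) * X))) :=
      ((continuous_id.mul continuous_const).tendsto 0).mono_left nhdsWithin_le_nhds
    rw [zero_mul] at this
    exact this.eventually (eventually_le_nhds one_pos)
  filter_upwards [hη0, self_mem_nhdsWithin] with η h1 hη
  have hη : 0 < η := hη
  have hi := wt_int (a := a) hη hu huc hb
  have e1 : ∫ t in Ioc T X, wt a b η t * u t ≤ ∫ t in Ioi T, wt a b η t * u t := by
    refine setIntegral_mono_set hi ?_ (Ioc_subset_Ioi_self.eventuallyLE)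
    filter_upwards [ae_restrict_mem measurableSet_Ioi] with t ht
    exact (mul_pos (wt_pos hη) (hu t (le_of_lt ht))).le
  have e2 : ∫ t in Ioc T X, (1 / 2 : ℝ) * (Real.exp (-a * t) * u t) ≤
      ∫ t in Ioc T X, wt a b η t * u t := by
    refine setIntegral_mono_on ?_ (hi.mono_set Ioc_subset_Ioi_self) measurableSet_Ioc ?_
    · exact (((hUc.mono Icc_subset_Ici_self).integrableOn_Icc).mono_set
        Ioc_subset_Icc_self).const_mul _
    · intro t ht
      have hut := hu t ht.1.le
      have : Real.exp (-a * t) / 2 ≤ wt a b η t := by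
        refine wt_ge hη ?_
        have : Real.exp (b * t) = Real.exp ((b - a) * t) * Real.exp (a * t) := by
          rw [← Real.exp_add]; ring_nf
        rw [this, ← mul_assoc]
        have h3 : η * Real.exp ((b - a) * t) ≤ 1 := by
          refine le_trans ?_ h1
          exact mul_le_mul_of_nonneg_left (Real.exp_le_exp.2
            (mul_le_mul_of_nonneg_left ht.2 (by linarith))) hη.le
        nlinarith [Real.exp_pos (a * t)]
      nlinarith
  rw [integral_const_mul, ← intervalIntegral.integral_of_le hX] at e2
  linarith

set_option maxHeartbeats 2000000 in
theorem main_est {u v h : ℝ → ℝ} {lam C δ T0 z : ℝ} (hδ : 0 ≤ δ)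
    (hu : ∀ t, T0 ≤ t → 0 < u t) (hv : ∀ t, T0 ≤ t → 0 < v t)
    (hder : ∀ t, T0 ≤ t → HasDerivAt u (-lam * u t + h t) t)
    (hcont : ContinuousOn h (Ici T0)) (hvc : ContinuousOn v (Ici T0))
    (hlim : ∀ ε > 0, ∀ᶠ t in atTop, |h t - C * v (t - δ)| ≤ ε * v (t - δ))
    {ε : ℝ} (hε : 0 < ε) :
    ∀ᶠ ρ in 𝓝[>] (0 : ℝ), ∀ᶠ T in atTop, ∀ a b, z - ρ ≤ a → a ≤ b → b ≤ z + ρ →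
      IntegrableAtFilter (fun t => Real.exp (-b * t) * u t) atTop volume →
      IntegrableAtFilter (fun t => Real.exp (-b * t) * v t) atTop volume →
      ∃ K, ∀ η, 0 < η →
        |(z + lam) * (∫ t in Ioi T, wt a b η t * u t)
          - C * Real.exp (-z * δ) * ∫ t in Ioi T, wt a b η t * v t|
        ≤ ε * ((∫ t in Ioi T, wt a b η t * u t) + ∫ t in Ioi T, wt a b η t * v t) + K := by
  have huc : ContinuousOn u (Ici T0) := fun t ht => (hder t ht).continuousAt.continuousWithinAt
  obtain ⟨ε2, hε2, hCε2⟩ : ∃ ε2 > 0, |C| * ε2 ≤ ε / 2 := by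
    refine ⟨ε / (2 * (|C| + 1)), by positivity, ?_⟩
    rw [mul_div_assoc', div_le_div_iff₀ (by positivity) (by positivity)]
    nlinarith [abs_nonneg C]
  obtain ⟨ε1, hε1, hε1'⟩ : ∃ ε1 > 0, ε1 * (Real.exp (-z * δ) + ε2) ≤ ε / 2 := by
    refine ⟨ε / 2 / (Real.exp (-z * δ) + ε2), by positivity, ?_⟩
    rw [div_mul_cancel₀ _ (by positivity)]
  have hρ1 : ∀ᶠ ρ in 𝓝[>] (0 : ℝ), Real.exp (-(z - ρ) * δ) ≤ Real.exp (-z * δ) + ε2 := by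
    have : Tendsto (fun ρ : ℝ => Real.exp (-(z - ρ) * δ)) (𝓝[>] 0) (𝓝 (Real.exp (-(z - 0) * δ))) :=
      (Continuous.tendsto (by fun_prop) 0).mono_left nhdsWithin_le_nhds
    rw [sub_zero] at this
    exact this.eventually (eventually_le_nhds (by linarith))
  have hρ2 : ∀ᶠ ρ in 𝓝[>] (0 : ℝ), Real.exp (-z * δ) - ε2 ≤ Real.exp (-(z + ρ) * δ) := by
    have : Tendsto (fun ρ : ℝ => Real.exp (-(z + ρ) * δ)) (𝓝[>] 0) (𝓝 (Real.exp (-(z + 0) * δ))) :=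
      (Continuous.tendsto (by fun_prop) 0).mono_left nhdsWithin_le_nhds
    rw [add_zero] at this
    exact this.eventually (eventually_ge_nhds (by linarith))
  have hρ3 : ∀ᶠ ρ in 𝓝[>] (0 : ℝ), ρ ≤ ε :=
    nhdsWithin_le_nhds (eventually_le_nhds hε)
  filter_upwards [hρ1, hρ2, hρ3] with ρ h1 h2 h3
  filter_upwards [eventually_forall_ge_atTop.2 (hlim ε1 hε1), eventually_ge_atTop (T0 + δ)] with T hT hTT
  intro a b haz hab hbz hiu hiv
  have hTT0 : T0 ≤ T := by linarith
  have hTδ : T0 ≤ T - δ := by linarith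
  have hea : Real.exp (-a * δ) ≤ Real.exp (-z * δ) + ε2 := by
    refine le_trans (Real.exp_le_exp.2 ?_) h1
    nlinarith
  have heb : Real.exp (-z * δ) - ε2 ≤ Real.exp (-b * δ) := by
    refine le_trans h2 (Real.exp_le_exp.2 ?_)
    nlinarith
  have hvcδ : ContinuousOn (fun t => Real.exp (-a * t) * v t) (Icc (T - δ) T) :=
    ContinuousOn.mul (by fun_prop) (hvc.mono (fun t ht => hTδ.trans ht.1))
  set K1 := ∫ t in Ioc (T - δ) T, Real.exp (-a * t) * v t with hK1
  refine ⟨Real.exp (-a * T) * u T + (|C| * Real.exp (-z * δ) + ε) * K1, fun η hη => ?_⟩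
  -- integrability
  have iu : IntegrableOn (fun t => wt a b η t * u t) (Ioi T) :=
    wt_int hη (fun t ht => hu t (hTT0.trans ht)) (huc.mono (Ici_subset_Ici.2 hTT0)) hiu
  have iv : IntegrableOn (fun t => wt a b η t * v t) (Ioi (T - δ)) :=
    wt_int hη (fun t ht => hv t (hTδ.trans ht)) (hvc.mono (Ici_subset_Ici.2 hTδ)) hiv
  have ivs : IntegrableOn (fun t => wt a b η (t - δ) * v (t - δ)) (Ioi T) :=
    (shift_int (fun t => wt a b η t * v t) T δ).2 iv
  have eJ : ∫ t in Ioi T, wt a b η (t - δ) * v (t - δ)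
      = (∫ t in Ioc (T - δ) T, wt a b η t * v t) + ∫ t in Ioi T, wt a b η t * v t := by
    rw [shift_integral (fun t => wt a b η t * v t) T δ,
      ← setIntegral_union Ioc_disjoint_Ioi_same measurableSet_Ioi
        (iv.mono_set Ioc_subset_Ioi_self) (iv.mono_set (Ioi_subset_Ioi (by linarith))),
      Ioc_union_Ioi_eq_Ioi (by linarith)]
  have hκ0 : 0 ≤ ∫ t in Ioc (T - δ) T, wt a b η t * v t := by
    refine setIntegral_nonneg measurableSet_Ioc fun t ht => ?_
    exact (mul_pos (wt_pos hη) (hv t (hTδ.trans ht.1.le))).le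
  have hκ1 : ∫ t in Ioc (T - δ) T, wt a b η t * v t ≤ K1 := by
    refine setIntegral_mono_on (iv.mono_set Ioc_subset_Ioi_self)
      (hvcδ.integrableOn_Icc.mono_set Ioc_subset_Icc_self) measurableSet_Ioc fun t ht => ?_
    exact mul_le_mul_of_nonneg_right (wt_le_a hη) (hv t (hTδ.trans ht.1.le)).le
  choose θ hθa hθb hθ using fun t => wt_deriv (t := t) (a := a) (b := b) hη hab
  -- the pointwise estimate
  set Q : ℝ → ℝ := fun t => deriv (wt a b η) t * u t + wt a b η t * (-lam * u t + h t) with hQ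
  have hQd : ∀ t, T ≤ t → HasDerivAt (fun t => wt a b η t * u t) (Q t) t := by
    intro t ht
    have := (hθ t).mul (hder t (hTT0.trans ht))
    refine this.congr_deriv ?_
    simp only [hQ, (hθ t).deriv]
  set A : ℝ → ℝ := fun t => (z + lam) * (wt a b η t * u t)
    - C * Real.exp (-z * δ) * (wt a b η (t - δ) * v (t - δ)) with hA
  have hpt : ∀ t, T ≤ t → |Q t + A t| ≤
      ε * (wt a b η t * u t + wt a b η (t - δ) * v (t - δ)) := by
    intro t ht
    have hut := hu t (hTT0.trans ht)
    have hvt := hv (t - δ) (by linarith)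
    have hw := wt_pos (a := a) (b := b) (t := t) hη
    have hW := wt_pos (a := a) (b := b) (t := t - δ) hη
    obtain ⟨s1, s2⟩ := wt_shift (t := t) hη hab hδ
    have hh := hT t ht
    set w := wt a b η t
    set W := wt a b η (t - δ)
    set V := v (t - δ)
    have e : Q t + A t = (z - θ t) * (w * u t) + (w * (h t - C * V)
        + C * (w - Real.exp (-z * δ) * W) * V) := by
      simp only [hQ, hA, (hθ t).deriv]; ring
    rw [e]
    have b1 : |(z - θ t) * (w * u t)| ≤ ε * (w * u t) := by
      rw [abs_mul, abs_of_pos (mul_pos hw hut)]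
      refine mul_le_mul_of_nonneg_right ?_ (mul_pos hw hut).le
      rw [abs_le]; constructor <;> linarith [hθa t, hθb t]
    have b2 : |w * (h t - C * V)| ≤ ε / 2 * (W * V) := by
      rw [abs_mul, abs_of_pos hw]
      have hw2 : w ≤ (Real.exp (-z * δ) + ε2) * W := s2.trans (by gcongr)
      calc w * |h t - C * V| ≤ ((Real.exp (-z * δ) + ε2) * W) * (ε1 * V) := by gcongr
        _ = (ε1 * (Real.exp (-z * δ) + ε2)) * (W * V) := by ring
        _ ≤ _ := by gcongr
    have b3 : |C * (w - Real.exp (-z * δ) * W) * V| ≤ ε / 2 * (W * V) := by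
      rw [abs_mul, abs_mul, abs_of_pos hvt]
      have : |w - Real.exp (-z * δ) * W| ≤ ε2 * W := by
        rw [abs_le]; constructor <;> nlinarith
      calc |C| * |w - Real.exp (-z * δ) * W| * V ≤ |C| * (ε2 * W) * V := by gcongr
        _ = (|C| * ε2) * (W * V) := by ring
        _ ≤ _ := by gcongr
    calc _ ≤ |(z - θ t) * (w * u t)| + (|w * (h t - C * V)|
        + |C * (w - Real.exp (-z * δ) * W) * V|) :=
          (abs_add_le _ _).trans (add_le_add_right (abs_add_le _ _) _)
      _ ≤ _ := by linarith
  have iA : IntegrableOn A (Ioi T) := (iu.const_mul _).sub (ivs.const_mul _)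
  have iE : IntegrableOn (fun t => ε * (wt a b η t * u t + wt a b η (t - δ) * v (t - δ))) (Ioi T) :=
    (iu.add ivs).const_mul _
  have mQ : AEStronglyMeasurable Q (volume.restrict (Ioi T)) := by
    refine AEStronglyMeasurable.add ?_ ?_
    · refine AEStronglyMeasurable.mul (measurable_deriv _).aestronglyMeasurable ?_
      exact (huc.mono (fun t ht => hTT0.trans (le_of_lt ht))).aestronglyMeasurable measurableSet_Ioi
    · refine ContinuousOn.aestronglyMeasurable ?_ measurableSet_Ioi
      refine (wt_cont hη).continuousOn.mul (ContinuousOn.add (continuousOn_const.mul ?_) ?_)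
      · exact huc.mono (fun t ht => hTT0.trans (le_of_lt ht))
      · exact hcont.mono (fun t ht => hTT0.trans (le_of_lt ht))
  have iQA : IntegrableOn (fun t => Q t + A t) (Ioi T) := by
    refine Integrable.mono' iE (mQ.add iA.aestronglyMeasurable) ?_
    filter_upwards [ae_restrict_mem measurableSet_Ioi] with t ht
    exact hpt t (le_of_lt ht)
  have iQ : IntegrableOn Q (Ioi T) := by
    refine (iQA.sub iA).congr (Eventually.of_forall fun t => ?_)
    simp
  have hlim0 : Tendsto (fun t => wt a b η t * u t) atTop (𝓝 0) :=
    tendsto_zero_of_hasDerivAt_of_integrableOn_Ioi (fun t ht => hQd t (le_of_lt ht)) iQ iu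
  have eQ : ∫ t in Ioi T, Q t = 0 - wt a b η T * u T :=
    integral_Ioi_of_hasDerivAt_of_tendsto' (fun t ht => hQd t ht) iQ hlim0
  have eA : ∫ t in Ioi T, A t = (z + lam) * (∫ t in Ioi T, wt a b η t * u t)
      - C * Real.exp (-z * δ) * ∫ t in Ioi T, wt a b η (t - δ) * v (t - δ) := by
    rw [integral_sub (iu.const_mul _) (ivs.const_mul _), integral_const_mul, integral_const_mul]
  have key : |∫ t in Ioi T, (Q t + A t)| ≤
      ∫ t in Ioi T, ε * (wt a b η t * u t + wt a b η (t - δ) * v (t - δ)) := by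
    refine norm_integral_le_of_norm_le (f := fun t => Q t + A t) iE ?_
    filter_upwards [ae_restrict_mem measurableSet_Ioi] with t ht
    exact hpt t (le_of_lt ht)
  rw [integral_add iQ iA, eQ, eA, integral_const_mul, integral_add iu ivs, eJ] at key
  have hwT : wt a b η T * u T ≤ Real.exp (-a * T) * u T :=
    mul_le_mul_of_nonneg_right (wt_le_a hη) (hu T hTT0).le
  have hwT0 : 0 < wt a b η T * u T := mul_pos (wt_pos hη) (hu T hTT0)
  set κ := ∫ t in Ioc (T - δ) T, wt a b η t * v t
  set Iu := ∫ t in Ioi T, wt a b η t * u t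
  set Iv := ∫ t in Ioi T, wt a b η t * v t
  have hCκ : |C * Real.exp (-z * δ) * κ| ≤ |C| * Real.exp (-z * δ) * K1 := by
    rw [abs_mul, abs_mul, abs_of_pos (Real.exp_pos _), abs_of_nonneg hκ0]
    gcongr
  have hεκ : ε * κ ≤ ε * K1 := by gcongr
  have hk := abs_le.1 key
  have hk2 := abs_le.1 hCκ
  have r1 : C * Real.exp (-z * δ) * (κ + Iv)
      = C * Real.exp (-z * δ) * κ + C * Real.exp (-z * δ) * Iv := by ring
  have r2 : ε * (Iu + (κ + Iv)) = ε * (Iu + Iv) + ε * κ := by ring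
  have r3 : (|C| * Real.exp (-z * δ) + ε) * K1 = |C| * Real.exp (-z * δ) * K1 + ε * K1 := by ring
  rw [r1, r2] at hk
  rw [abs_le, r3]
  constructor <;> linarith [hk.1, hk.2, hk2.1, hk2.2]

theorem alg_limit (n : ℕ) (A B : ℕ → ℝ) (hB : ∀ j, B j ≠ 0)
    (H : ∀ ε > 0, ∃ I : ℕ → ℝ, (∀ j, 0 < I j) ∧ I n = I 0 ∧
      ∀ j < n, |A j * I j - B j * I (j + 1)| ≤ ε * (I j + I (j + 1))) :
    ∏ j ∈ Finset.range n, A j = ∏ j ∈ Finset.range n, B j := by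
  choose I hI hIn hIe using fun k : ℕ => H (1 / ((k : ℝ) + 1)) (by positivity)
  have hε0 : Tendsto (fun k : ℕ => 1 / ((k : ℝ) + 1)) atTop (𝓝 0) :=
    tendsto_one_div_add_atTop_nhds_zero_nat
  have hr : ∀ j ∈ Finset.range n, Tendsto (fun k => I k (j + 1) / I k j) atTop (𝓝 (A j / B j)) := by
    intro j hj
    have hj := Finset.mem_range.1 hj
    have hBj : 0 < |B j| := abs_pos.2 (hB j)
    rw [tendsto_iff_norm_sub_tendsto_zero]
    have hb : Tendsto (fun k : ℕ => 1 / ((k : ℝ) + 1) * (2 * (1 + |A j / B j|) / |B j|))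
        atTop (𝓝 0) := by
      simpa using hε0.mul_const (2 * (1 + |A j / B j|) / |B j|)
    refine squeeze_zero' (Eventually.of_forall fun k => norm_nonneg _) ?_ hb
    filter_upwards [hε0.eventually (eventually_le_nhds (half_pos hBj))] with k hk
    have p1 := hI k j
    have p2 := hI k (j + 1)
    have h1 := hIe k j hj
    have hεp : 0 < 1 / ((k : ℝ) + 1) := by positivity
    set ε := 1 / ((k : ℝ) + 1)
    set r := I k (j + 1) / I k j with hr
    have hrp : 0 < r := by positivity
    have e1 : I k (j + 1) = r * I k j := by rw [hr]; field_simp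
    rw [e1] at h1
    have h2 : |A j - B j * r| * I k j ≤ ε * (1 + r) * I k j := by
      rw [← abs_of_pos p1, ← abs_mul, abs_of_pos p1]
      have q1 : (A j - B j * r) * I k j = A j * I k j - B j * (r * I k j) := by ring
      have q2 : ε * (1 + r) * I k j = ε * (I k j + r * I k j) := by ring
      rw [q1, q2]; exact h1
    have h3 : |A j - B j * r| ≤ ε * (1 + r) := le_of_mul_le_mul_right h2 p1
    have h4 : |A j - B j * r| = |B j| * |r - A j / B j| := by
      rw [← abs_mul, ← abs_neg]; congr 1
      field_simp [hB j]; ring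
    have h5 : r ≤ |r - A j / B j| + |A j / B j| := by
      linarith [le_abs_self (r - A j / B j), le_abs_self (A j / B j)]
    rw [h4] at h3
    rw [Real.norm_eq_abs]
    set D := |r - A j / B j|
    set q := |A j / B j|
    have hD : 0 ≤ D := abs_nonneg _
    have h6 : |B j| / 2 * D ≤ ε * (1 + q) := by nlinarith
    rw [mul_div_assoc', le_div_iff₀ hBj]; linarith
  have hp := tendsto_finsetProd (Finset.range n) hr
  have h1 : ∀ k, ∏ j ∈ Finset.range n, I k (j + 1) / I k j = 1 := by
    intro k
    have q1 := Finset.prod_range_succ (I k) n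
    rw [Finset.prod_range_succ', hIn] at q1
    have q2 := mul_right_cancel₀ (hI k 0).ne' q1
    rw [Finset.prod_div_distrib, q2]
    exact div_self (Finset.prod_ne_zero_iff.2 fun j _ => (hI k j).ne')
  simp only [h1] at hp
  have h2 := tendsto_nhds_unique hp tendsto_const_nhds
  rw [Finset.prod_div_distrib] at h2
  have hBp : ∏ j ∈ Finset.range n, B j ≠ 0 := Finset.prod_ne_zero_iff.2 fun j _ => hB j
  exact ((div_eq_one_iff_eq hBp).1 h2)

theorem exp_mul_hasDerivAt {u : ℝ → ℝ} {lam g t : ℝ} (h : HasDerivAt u (-lam * u t + g) t) :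
    HasDerivAt (fun x => Real.exp (lam * x) * u x) (Real.exp (lam * t) * g) t := by
  have h1 : HasDerivAt (fun x => Real.exp (lam * x)) (Real.exp (lam * t) * (lam * 1)) t :=
    ((hasDerivAt_id t).const_mul lam).exp
  refine (h1.mul h).congr_deriv ?_
  ring

theorem monoOn_of_hasDerivAt {u u' : ℝ → ℝ} {T : ℝ} (h : ∀ t, T ≤ t → HasDerivAt u (u' t) t)
    (h0 : ∀ t, T ≤ t → 0 ≤ u' t) : MonotoneOn u (Ici T) := by
  refine monotoneOn_of_deriv_nonneg (convex_Ici T)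
    (fun t ht => (h t ht).continuousAt.continuousWithinAt) ?_ ?_
  · intro t ht
    rw [interior_Ici] at ht
    exact (h t (le_of_lt ht)).differentiableAt.differentiableWithinAt
  · intro t ht
    rw [interior_Ici] at ht
    rw [(h t (le_of_lt ht)).deriv]; exact h0 t (le_of_lt ht)

theorem strictMonoOn_of_hasDerivAt {u u' : ℝ → ℝ} {T : ℝ} (h : ∀ t, T ≤ t → HasDerivAt u (u' t) t)
    (h0 : ∀ t, T ≤ t → 0 < u' t) : StrictMonoOn u (Ici T) := by
  refine strictMonoOn_of_deriv_pos (convex_Ici T)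
    (fun t ht => (h t ht).continuousAt.continuousWithinAt) ?_
  · intro t ht
    rw [interior_Ici] at ht
    rw [(h t (le_of_lt ht)).deriv]; exact h0 t (le_of_lt ht)

theorem not_S_pos {u v h : ℝ → ℝ} {lam C δ T0 : ℝ}
    (hu : ∀ t, T0 ≤ t → 0 < u t) (hv : ∀ t, T0 ≤ t → 0 < v t)
    (hder : ∀ t, T0 ≤ t → HasDerivAt u (-lam * u t + h t) t) (hC : 0 < C)
    (hlim : ∀ ε > 0, ∀ᶠ t in atTop, |h t - C * v (t - δ)| ≤ ε * v (t - δ)) :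
    ¬ IntegrableAtFilter (fun t => Real.exp (-(-lam) * t) * u t) atTop volume := by
  intro hInteg
  have huc : ContinuousOn u (Ici T0) := fun t ht => (hder t ht).continuousAt.continuousWithinAt
  obtain ⟨T1, hT1⟩ := eventually_atTop.1 ((hlim C hC).and (eventually_ge_atTop (T0 + |δ|)))
  have hT0 : T0 ≤ T1 := by linarith [(hT1 T1 le_rfl).2, abs_nonneg δ]
  have hpos : ∀ t, T1 ≤ t → 0 ≤ h t := by
    intro t ht
    obtain ⟨h1, h2⟩ := hT1 t ht
    have := (abs_le.1 h1).1
    linarith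
  have hm : MonotoneOn (fun x => Real.exp (lam * x) * u x) (Ici T1) :=
    monoOn_of_hasDerivAt (fun t ht => exp_mul_hasDerivAt (hder t (hT0.trans ht)))
      (fun t ht => mul_nonneg (Real.exp_pos _).le (hpos t ht))
  simp only [neg_neg] at hInteg
  have hInteg1 : IntegrableOn (fun t => Real.exp (lam * t) * u t) (Ioi T1) :=
    intOn_of_filter (ContinuousOn.mul (by fun_prop) (huc.mono (Ici_subset_Ici.2 hT0))) hInteg
  exact not_intOn_of_lower (mul_pos (Real.exp_pos (lam * T1)) (hu T1 hT0))
    (fun t ht => hm (mem_Ici.2 le_rfl) (mem_Ici.2 ht.le) ht.le) hInteg1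

theorem not_S_delay {y : ℝ → ℝ} {T0 ρ κ : ℝ} (hρ : 0 < ρ) (hκ : 0 < κ)
    (hy : ∀ t, T0 ≤ t → 0 < y t) (hyc : ContinuousOn y (Ici T0))
    (hk : ∀ᶠ t in atTop, κ * y (t - ρ) ≤ y t) :
    ¬ IntegrableAtFilter (fun t => Real.exp (-(Real.log κ / ρ) * t) * y t) atTop volume := by
  intro hInteg
  set s := Real.log κ / ρ with hs
  have hsρ : Real.exp (s * ρ) = κ := by
    rw [hs, div_mul_cancel₀ _ hρ.ne', Real.exp_log hκ]
  obtain ⟨T, hT⟩ := eventually_atTop.1 (hk.and (eventually_ge_atTop (T0 + ρ)))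
  have hT0 : T0 ≤ T - ρ := by linarith [(hT T le_rfl).2]
  have hc : ContinuousOn (fun t => Real.exp (-s * t) * y t) (Ici (T - ρ)) :=
    ContinuousOn.mul (by fun_prop) (hyc.mono (Ici_subset_Ici.2 hT0))
  have hi := intOn_of_filter hc hInteg
  have his : IntegrableOn (fun t => Real.exp (-s * (t - ρ)) * y (t - ρ)) (Ioi T) :=
    (shift_int (fun t => Real.exp (-s * t) * y t) T ρ).2 hi
  have h1 : ∫ t in Ioi T, Real.exp (-s * (t - ρ)) * y (t - ρ) ≤
      ∫ t in Ioi T, Real.exp (-s * t) * y t := by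
    refine setIntegral_mono_on his (hi.mono_set (Ioi_subset_Ioi (by linarith)))
      measurableSet_Ioi fun t ht => ?_
    have h2 := (hT t (le_of_lt ht)).1
    have e : Real.exp (-s * (t - ρ)) = Real.exp (-s * t) * κ := by
      rw [← hsρ, ← Real.exp_add]; ring_nf
    rw [e, mul_assoc]
    exact mul_le_mul_of_nonneg_left h2 (Real.exp_pos _).le
  rw [shift_integral (fun t => Real.exp (-s * t) * y t) T ρ,
    ← Ioc_union_Ioi_eq_Ioi (show T - ρ ≤ T by linarith),
    setIntegral_union Ioc_disjoint_Ioi_same measurableSet_Ioi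
        (hi.mono_set Ioc_subset_Ioi_self) (hi.mono_set (Ioi_subset_Ioi (by linarith)))] at h1
  have h3 : 0 < ∫ t in (T - ρ)..T, Real.exp (-s * t) * y t := by
    refine intervalIntegral.intervalIntegral_pos_of_pos_on ?_ (fun t ht => ?_) (by linarith)
    · exact ContinuousOn.intervalIntegrable (hc.mono (by
        rw [uIcc_of_le (by linarith)]; exact Icc_subset_Ici_self))
    · exact mul_pos (Real.exp_pos _) (hy t (hT0.trans ht.1.le))
  rw [intervalIntegral.integral_of_le (by linarith)] at h3
  linarith

theorem neg_deriv_bound {u v h : ℝ → ℝ} {lam C δ T0 : ℝ} (hlam : 0 < lam) (hδ : 0 ≤ δ)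
    (hu : ∀ t, T0 ≤ t → 0 < u t) (hC : C < 0)
    (hlim : ∀ ε > 0, ∀ᶠ t in atTop, |h t - C * v (t - δ)| ≤ ε * v (t - δ)) :
    ∀ᶠ t in atTop, -lam * u t + h t ≤ -(-C / 2 * v (t - δ)) := by
  filter_upwards [hlim (-C / 2) (by linarith), eventually_ge_atTop T0] with t h1 h2
  have := (abs_le.1 h1).2
  nlinarith [hu t h2]

theorem not_S_neg {n : ℕ} (hn : 0 < n) {y h : ℕ → ℝ → ℝ} {lam C δ : ℕ → ℝ} {T0 : ℝ}
    (hper : y n = y 0) (hlam : ∀ j, 0 < lam j) (hδ : ∀ j, 0 ≤ δ j)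
    (hΔ : 0 < ∑ j ∈ Finset.range n, δ j)
    (hy : ∀ j t, T0 ≤ t → 0 < y j t)
    (hder : ∀ j t, T0 ≤ t → HasDerivAt (y j) (-lam j * y j t + h j t) t)
    (hlim : ∀ j, ∀ ε > 0, ∀ᶠ t in atTop,
      |h j t - C j * y (j + 1) (t - δ j)| ≤ ε * y (j + 1) (t - δ j))
    (hC : ∀ j, C j < 0) :
    ∃ s, ¬ IntegrableAtFilter (fun t => Real.exp (-s * t) * y 0 t) atTop volume := by
  have hbd : ∀ j, ∀ᶠ t in atTop, -lam j * y j t + h j t ≤ -(-C j / 2 * y (j + 1) (t - δ j)) :=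
    fun j => neg_deriv_bound (hlam j) (hδ j) (hy j) (hC j) (hlim j)
  have hanti : ∀ j, ∃ T, T0 ≤ T ∧ (∀ t, T ≤ t →
      -lam j * y j t + h j t ≤ -(-C j / 2 * y (j + 1) (t - δ j))) ∧ AntitoneOn (y j) (Ici T) := by
    intro j
    obtain ⟨T, hT⟩ := eventually_atTop.1 ((hbd j).and (eventually_ge_atTop (T0 + δ j)))
    have hTT : T0 + δ j ≤ T := (hT T le_rfl).2
    have hTT0 : T0 ≤ T := by linarith [hδ j]
    refine ⟨T, hTT0, fun t ht => (hT t ht).1, ?_⟩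
    have hm : MonotoneOn (fun t => -y j t) (Ici T) := by
      refine monoOn_of_hasDerivAt (fun t ht => (hder j t (hTT0.trans ht)).neg) fun t ht => ?_
      have h1 := (hT t ht).1
      have h2 := hy (j + 1) (t - δ j) (by linarith)
      have := hC j
      have : 0 < -C j / 2 * y (j + 1) (t - δ j) := mul_pos (by linarith) h2
      linarith
    intro p hp q hq hpq
    have := hm hp hq hpq
    simp only at this; linarith
  set Δ := ∑ j ∈ Finset.range n, δ j with hΔdef
  have hn' : (0 : ℝ) < n := by exact_mod_cast hn
  set η := Δ / (2 * n) with hη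
  have hηp : 0 < η := by positivity
  have hstep : ∀ j, ∀ᶠ t in atTop, η * (-C j / 2) * y (j + 1) (t + η - δ j) ≤ y j t := by
    intro j
    obtain ⟨T, hT0, hb, -⟩ := hanti j
    obtain ⟨T', hT0', -, ha⟩ := hanti (j + 1)
    filter_upwards [eventually_ge_atTop T, eventually_ge_atTop (T' + δ j)] with t h1 h2
    obtain ⟨ξ, hξ, he⟩ := exists_hasDerivAt_eq_slope (y j) (fun t => -lam j * y j t + h j t)
      (show t < t + η by linarith)
      (fun x hx => (hder j x (by linarith [hx.1])).continuousAt.continuousWithinAt)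
      (fun x hx => hder j x (by linarith [hx.1]))
    have h3 := hb ξ (by linarith [hξ.1])
    have h4 : y (j + 1) (t + η - δ j) ≤ y (j + 1) (ξ - δ j) :=
      ha (mem_Ici.2 (by linarith [hξ.1])) (mem_Ici.2 (by linarith)) (by linarith [hξ.2])
    have h5 := hy j (t + η) (by linarith)
    rw [he, add_sub_cancel_left, div_le_iff₀ hηp] at h3
    have h6 : 0 < -C j / 2 := by linarith [hC j]
    have h7 : η * (-C j / 2) * y (j + 1) (t + η - δ j) ≤ η * (-C j / 2) * y (j + 1) (ξ - δ j) := by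
      gcongr
    nlinarith
  have hind : ∀ m : ℕ, ∃ κ > 0, ∀ᶠ t in atTop,
      κ * y m (t + (m * η - ∑ i ∈ Finset.range m, δ i)) ≤ y 0 t := by
    intro m
    induction m with
    | zero => exact ⟨1, one_pos, by simp⟩
    | succ m ih =>
      obtain ⟨κ, hκ, hm⟩ := ih
      refine ⟨κ * (η * (-C m / 2)), by have := hC m; have : 0 < -C m / 2 := by linarith
                                       positivity, ?_⟩
      have h1 := (tendsto_atTop_add_const_right atTop (m * η - ∑ i ∈ Finset.range m, δ i)
        tendsto_id).eventually (hstep m)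
      filter_upwards [hm, h1] with t h2 h3
      simp only [id] at h3
      refine le_trans ?_ h2
      rw [Finset.sum_range_succ, mul_assoc]
      refine mul_le_mul_of_nonneg_left ?_ hκ.le
      have e : t + (((m + 1 : ℕ) : ℝ) * η - (∑ i ∈ Finset.range m, δ i + δ m))
          = t + (m * η - ∑ i ∈ Finset.range m, δ i) + η - δ m := by push_cast; ring
      rw [e]; exact h3
  obtain ⟨κ, hκ, hk⟩ := hind n
  refine ⟨_, not_S_delay (ρ := Δ / 2) (half_pos hΔ) hκ (hy 0)
    (fun t ht => (hder 0 t ht).continuousAt.continuousWithinAt) ?_⟩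
  filter_upwards [hk] with t ht
  rw [hper] at ht
  have e : t + (n * η - Δ) = t - Δ / 2 := by
    rw [hη]; field_simp; ring
  rw [e] at ht; exact ht

theorem S_up {y : ℝ → ℝ} {T0 s s' : ℝ} (hy : ∀ t, T0 ≤ t → 0 < y t)
    (hyc : ContinuousOn y (Ici T0)) (hss : s ≤ s')
    (hInteg : IntegrableAtFilter (fun t => Real.exp (-s * t) * y t) atTop volume) :
    IntegrableAtFilter (fun t => Real.exp (-s' * t) * y t) atTop volume := by
  have hc : ∀ r : ℝ, ContinuousOn (fun t => Real.exp (-r * t) * y t) (Ici (max T0 0)) := fun r =>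
    ContinuousOn.mul (by fun_prop) (hyc.mono (Ici_subset_Ici.2 (le_max_left _ _)))
  refine filter_of_intOn (T := max T0 0) (Integrable.mono' (intOn_of_filter (hc s) hInteg) ?_ ?_)
  · exact ((hc s').mono Ioi_subset_Ici_self).aestronglyMeasurable measurableSet_Ioi
  · filter_upwards [ae_restrict_mem measurableSet_Ioi] with t ht
    have ht' : max T0 0 < t := ht
    have h1 := hy t ((le_max_left _ _).trans ht'.le)
    have h2 : 0 < t := lt_of_le_of_lt (le_max_right _ _) ht'
    rw [Real.norm_of_nonneg (by positivity)]
    refine mul_le_mul_of_nonneg_right (Real.exp_le_exp.2 ?_) h1.le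
    nlinarith

theorem S_nonempty {y : ℝ → ℝ} {T0 : ℝ} (hy : ∀ t, T0 ≤ t → 0 < y t)
    (hyc : ContinuousOn y (Ici T0)) (hz : Tendsto y atTop (𝓝 0)) :
    IntegrableAtFilter (fun t => Real.exp (-1 * t) * y t) atTop volume := by
  obtain ⟨T, hT⟩ := eventually_atTop.1
    ((hz.eventually (eventually_le_nhds one_pos)).and (eventually_ge_atTop T0))
  have hT0 := (hT T le_rfl).2
  refine filter_of_intOn (T := T) (Integrable.mono' (exp_neg_integrableOn_Ioi T one_pos) ?_ ?_)
  · exact (ContinuousOn.mul (by fun_prop) (hyc.mono (fun t ht => hT0.trans (le_of_lt ht)))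
      ).aestronglyMeasurable measurableSet_Ioi
  · filter_upwards [ae_restrict_mem measurableSet_Ioi] with t ht
    have h1 := hT t (le_of_lt ht)
    have h2 := hy t h1.2
    rw [Real.norm_of_nonneg (by positivity)]
    nlinarith [Real.exp_pos (-1 * t)]

theorem linear_core {n : ℕ} (hn : 0 < n) {y h : ℕ → ℝ → ℝ} {lam C δ : ℕ → ℝ} {T0 : ℝ}
    (hper : ∀ j, y (j + n) = y j) (hlam : ∀ j, 0 < lam j) (hδ : ∀ j, 0 ≤ δ j)
    (hΔ : 0 < ∑ j ∈ Finset.range n, δ j)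
    (hy : ∀ j t, T0 ≤ t → 0 < y j t)
    (hder : ∀ j t, T0 ≤ t → HasDerivAt (y j) (-lam j * y j t + h j t) t)
    (hcont : ∀ j, ContinuousOn (h j) (Ici T0))
    (hlim : ∀ j, ∀ ε > 0, ∀ᶠ t in atTop,
      |h j t - C j * y (j + 1) (t - δ j)| ≤ ε * y (j + 1) (t - δ j))
    (hC : ∀ j, C j ≠ 0) (hz : ∀ j, Tendsto (y j) atTop (𝓝 0)) :
    ∃ z : ℝ, ∏ j ∈ Finset.range n, (z + lam j)
      = ∏ j ∈ Finset.range n, (C j * Real.exp (-z * δ j)) := by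
  have hyc : ∀ j, ContinuousOn (y j) (Ici T0) :=
    fun j t ht => (hder j t ht).continuousAt.continuousWithinAt
  set S : ℕ → ℝ → Prop := fun j s =>
    IntegrableAtFilter (fun t => Real.exp (-s * t) * y j t) atTop volume with hS
  have hSs : ∀ j s, S j s → S (j + 1) s := fun j s hs =>
    step_S (hδ j) (hy j) (hy (j + 1)) (hder j) (hcont j) (hyc (j + 1)) (hC j) (hlim j) hs
  have hSm : ∀ j m s, S j s → S (j + m) s := by
    intro j m s hs
    induction m with
    | zero => exact hs
    | succ m ih => exact hSs _ _ ih
  have hyn : ∀ j m, y (j + m * n) = y j := by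
    intro j m
    induction m with
    | zero => simp
    | succ m ih => rw [Nat.succ_mul, ← add_assoc, hper, ih]
  have hS0 : ∀ j s, S j s ↔ S 0 s := by
    intro j s
    constructor
    · intro hs
      have h1 := hSm j (j * n - j) s hs
      have h2 : j + (j * n - j) = 0 + j * n := by
        have : j ≤ j * n := Nat.le_mul_of_pos_right j hn
        omega
      rw [h2] at h1
      simp only [hS, hyn] at h1
      exact h1
    · intro hs
      simpa using hSm 0 j s hs
  have hne : S 0 1 := S_nonempty (hy 0) (hyc 0) (hz 0)
  have hnall : ∃ s, ¬ S 0 s := by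
    by_cases hj : ∃ j, 0 < C j
    · obtain ⟨j, hj⟩ := hj
      exact ⟨-lam j, fun hs => not_S_pos (hy j) (hy (j + 1)) (hder j) hj (hlim j) ((hS0 j _).2 hs)⟩
    · push Not at hj
      exact not_S_neg hn (by simpa using hper 0) hlam hδ hΔ hy hder hlim
        fun j => lt_of_le_of_ne (hj j) (hC j)
  obtain ⟨s₀, hs₀⟩ := hnall
  have hup : ∀ s s', s ≤ s' → S 0 s → S 0 s' := fun s s' hss hs => S_up (hy 0) (hyc 0) hss hs
  have hbdd : BddBelow {s | S 0 s} := ⟨s₀, fun s hs => by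
    by_contra hlt
    exact hs₀ (hup s s₀ (not_le.1 hlt).le hs)⟩
  set z := sInf {s | S 0 s} with hzdef
  refine ⟨z, alg_limit n _ _ (fun j => mul_ne_zero (hC j) (Real.exp_pos _).ne') fun ε hε => ?_⟩
  have hE : ∀ᶠ ρ in 𝓝[>] (0 : ℝ), ∀ j ∈ Finset.range n, ∀ᶠ T in atTop, ∀ a b,
      z - ρ ≤ a → a ≤ b → b ≤ z + ρ → S j b → S (j + 1) b →
      ∃ K, ∀ η, 0 < η →
        |(z + lam j) * (∫ t in Ioi T, wt a b η t * y j t)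
          - C j * Real.exp (-z * δ j) * ∫ t in Ioi T, wt a b η t * y (j + 1) t|
        ≤ ε / 2 * ((∫ t in Ioi T, wt a b η t * y j t)
          + ∫ t in Ioi T, wt a b η t * y (j + 1) t) + K := by
    rw [Filter.eventually_all_finset]
    intro j _
    exact main_est (hδ j) (hy j) (hy (j + 1)) (hder j) (hcont j) (hyc (j + 1)) (hlim j)
      (half_pos hε)
  obtain ⟨ρ, hρ, hρ0⟩ := (hE.and self_mem_nhdsWithin).exists
  have hρ0 : 0 < ρ := hρ0
  rw [← Filter.eventually_all_finset] at hρ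
  obtain ⟨T, hT, hTT0⟩ := (hρ.and (eventually_ge_atTop T0)).exists
  have ha : ¬ S 0 (z - ρ) := fun hs => by
    have := csInf_le hbdd hs
    linarith
  have hb : S 0 (z + ρ) := by
    obtain ⟨s, hs, hlt⟩ := exists_lt_of_csInf_lt (s := {s | S 0 s}) ⟨1, hne⟩
      (show sInf {s | S 0 s} < z + ρ by linarith)
    exact hup s _ hlt.le hs
  have hT' : ∀ j, ∃ K, j ∈ Finset.range n → ∀ η, 0 < η →
        |(z + lam j) * (∫ t in Ioi T, wt (z - ρ) (z + ρ) η t * y j t)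
          - C j * Real.exp (-z * δ j) * ∫ t in Ioi T, wt (z - ρ) (z + ρ) η t * y (j + 1) t|
        ≤ ε / 2 * ((∫ t in Ioi T, wt (z - ρ) (z + ρ) η t * y j t)
          + ∫ t in Ioi T, wt (z - ρ) (z + ρ) η t * y (j + 1) t) + K := by
    intro j
    by_cases hj : j ∈ Finset.range n
    · obtain ⟨K, hK⟩ := hT j hj (z - ρ) (z + ρ) le_rfl (by linarith) le_rfl
        ((hS0 j _).2 hb) ((hS0 (j + 1) _).2 hb)
      exact ⟨K, fun _ => hK⟩
    · exact ⟨0, fun h => absurd h hj⟩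
  choose K hK using hT'
  have hItend : ∀ j, Tendsto (fun η => ∫ t in Ioi T, wt (z - ρ) (z + ρ) η t * y j t)
      (𝓝[>] 0) atTop := fun j =>
    wt_int_tendsto (fun t ht => hy j t (hTT0.trans ht)) ((hyc j).mono (Ici_subset_Ici.2 hTT0))
      (fun hs => ha ((hS0 j _).1 hs)) ((hS0 j _).2 hb) (by linarith)
  have hbig : ∀ᶠ η in 𝓝[>] (0 : ℝ), ∀ j ∈ Finset.range n,
      2 * K j / ε ≤ ∫ t in Ioi T, wt (z - ρ) (z + ρ) η t * y j t := by
    rw [Filter.eventually_all_finset]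
    intro j _
    exact (hItend j).eventually (eventually_ge_atTop _)
  obtain ⟨η, hη, hη0⟩ := (hbig.and self_mem_nhdsWithin).exists
  have hη0 : 0 < η := hη0
  have hIpos : ∀ j, 0 < ∫ t in Ioi T, wt (z - ρ) (z + ρ) η t * y j t := by
    intro j
    have hi : IntegrableOn (fun t => wt (z - ρ) (z + ρ) η t * y j t) (Ioi T) :=
      wt_int hη0 (fun t ht => hy j t (hTT0.trans ht))
        ((hyc j).mono (Ici_subset_Ici.2 hTT0)) ((hS0 j _).2 hb)
    have hp : ∀ t ∈ Ioi T, 0 < wt (z - ρ) (z + ρ) η t * y j t :=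
      fun t ht => mul_pos (wt_pos hη0) (hy j t (hTT0.trans (le_of_lt ht)))
    rw [setIntegral_pos_iff_support_of_nonneg_ae _ hi]
    · have : Ioi T ⊆ Function.support (fun t => wt (z - ρ) (z + ρ) η t * y j t) ∩ Ioi T :=
        fun t ht => ⟨(hp t ht).ne', ht⟩
      refine lt_of_lt_of_le ?_ (measure_mono this)
      simp
    · filter_upwards [ae_restrict_mem measurableSet_Ioi] with t ht
      exact (hp t ht).le
  refine ⟨fun j => ∫ t in Ioi T, wt (z - ρ) (z + ρ) η t * y j t, hIpos, ?_, fun j hj => ?_⟩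
  · have : y n = y 0 := by simpa using hper 0
    simp only [this]
  · have h1 := hK j (Finset.mem_range.2 hj) η hη0
    have h2 := hη j (Finset.mem_range.2 hj)
    rw [div_le_iff₀ hε] at h2
    have h3 := hIpos j
    have h4 := hIpos (j + 1)
    refine h1.trans ?_
    nlinarith

theorem upper_decay {u g : ℝ → ℝ} {lam T ε : ℝ} (hlam : 0 < lam) (hε : 0 < ε)
    (hder : ∀ t, T ≤ t → HasDerivAt u (-lam * u t + g t) t)
    (hg : ∀ᶠ t in atTop, g t ≤ lam * ε) : ∀ᶠ t in atTop, u t ≤ 2 * ε := by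
  obtain ⟨T1, hT1⟩ := eventually_atTop.1 (hg.and (eventually_ge_atTop T))
  have hm : MonotoneOn (fun t => -(Real.exp (lam * t) * (u t - ε))) (Ici T1) := by
    refine monoOn_of_hasDerivAt (u' := fun t => -(Real.exp (lam * t) * (g t - lam * ε)))
      (fun t ht => ?_) fun t ht => ?_
    · refine HasDerivAt.neg (exp_mul_hasDerivAt (u := fun t => u t - ε) ?_)
      refine ((hder t (hT1 t ht).2).sub_const ε).congr_deriv ?_
      ring
    · have := (hT1 t ht).1
      have h2 := Real.exp_pos (lam * t)
      nlinarith
  set K := Real.exp (lam * T1) * (u T1 - ε) with hK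
  have hlimK : Tendsto (fun t : ℝ => K * Real.exp (-(lam * t))) atTop (𝓝 0) := by
    have h1 : Tendsto (fun t : ℝ => lam * t) atTop atTop := tendsto_id.const_mul_atTop hlam
    simpa using (Real.tendsto_exp_neg_atTop_nhds_zero.comp h1).const_mul K
  filter_upwards [hlimK.eventually (eventually_le_nhds hε), eventually_ge_atTop T1] with t h1 h2
  have h3 := hm (mem_Ici.2 le_rfl) (mem_Ici.2 h2) h2
  simp only at h3
  have h4 : Real.exp (lam * t) * (u t - ε) ≤ K := by linarith
  have h5 : u t - ε ≤ K * Real.exp (-(lam * t)) := by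
    rw [Real.exp_neg, ← div_eq_mul_inv, le_div_iff₀ (Real.exp_pos _)]; linarith
  linarith

theorem tendsto_zero_of_upper {u : ℝ → ℝ} (h1 : ∀ ε > 0, ∀ᶠ t in atTop, u t ≤ 2 * ε)
    (h2 : ∀ ε > 0, ∀ᶠ t in atTop, -u t ≤ 2 * ε) : Tendsto u atTop (𝓝 0) := by
  rw [Metric.tendsto_nhds]
  intro ε hε
  filter_upwards [h1 (ε / 4) (by positivity), h2 (ε / 4) (by positivity)] with t a b
  rw [Real.dist_eq, sub_zero, abs_lt]
  constructor <;> linarith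

theorem tendsto_zero_forced {u g : ℝ → ℝ} {lam T : ℝ} (hlam : 0 < lam)
    (hder : ∀ t, T ≤ t → HasDerivAt u (-lam * u t + g t) t)
    (hg : Tendsto g atTop (𝓝 0)) : Tendsto u atTop (𝓝 0) := by
  refine tendsto_zero_of_upper (fun ε hε => upper_decay hlam hε hder ?_)
    (fun ε hε => upper_decay (u := fun t => -u t) (g := fun t => -g t) (T := T) hlam hε
      (fun t ht => ?_) ?_)
  · exact hg.eventually (eventually_le_nhds (by positivity))
  · refine (hder t ht).neg.congr_deriv ?_
    ring
  · have := hg.neg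
    rw [neg_zero] at this
    exact this.eventually (eventually_le_nhds (by positivity))

theorem tendsto_zero_mismatch {u g : ℝ → ℝ} {lam T : ℝ} (hlam : 0 < lam)
    (hder : ∀ t, T ≤ t → HasDerivAt u (-lam * u t + g t) t)
    (hu : ∀ᶠ t in atTop, 0 < u t) (hg : ∀ᶠ t in atTop, g t ≤ 0) : Tendsto u atTop (𝓝 0) := by
  refine tendsto_zero_of_upper (fun ε hε => upper_decay hlam hε hder ?_) (fun ε hε => ?_)
  · filter_upwards [hg] with t ht
    have : 0 < lam * ε := by positivity
    linarith
  · filter_upwards [hu] with t ht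
    linarith

theorem eventually_sign_of_forced {u g : ℝ → ℝ} {lam T : ℝ}
    (hder : ∀ t, T ≤ t → HasDerivAt u (-lam * u t + g t) t)
    (hg : ∀ᶠ t in atTop, 0 < g t) : (∀ᶠ t in atTop, 0 < u t) ∨ (∀ᶠ t in atTop, u t < 0) := by
  obtain ⟨T1, hT1⟩ := eventually_atTop.1 (hg.and (eventually_ge_atTop T))
  have hm : StrictMonoOn (fun t => Real.exp (lam * t) * u t) (Ici T1) :=
    strictMonoOn_of_hasDerivAt (fun t ht => exp_mul_hasDerivAt (hder t (hT1 t ht).2))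
      (fun t ht => mul_pos (Real.exp_pos _) (hT1 t ht).1)
  by_cases h : ∃ t, T1 ≤ t ∧ 0 ≤ u t
  · obtain ⟨t1, h1, h2⟩ := h
    left
    filter_upwards [eventually_gt_atTop t1] with t ht
    have h3 := hm (mem_Ici.2 h1) (mem_Ici.2 (h1.trans ht.le)) ht
    simp only at h3
    have h4 : 0 < Real.exp (lam * t) * u t := lt_of_le_of_lt (mul_nonneg (Real.exp_pos _).le h2) h3
    exact (pos_iff_pos_of_mul_pos h4).1 (Real.exp_pos _)
  · push Not at h
    right
    filter_upwards [eventually_ge_atTop T1] with t ht using h t ht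

theorem feedback_zero {F : ℝ → ℝ} {κ : ℝ} (hκ : κ = 1 ∨ κ = -1) (hF : Continuous F)
    (hfb : ∀ y, y ≠ 0 → 0 < κ * (y * F y)) : F 0 = 0 := by
  have hc : Tendsto (fun y => κ * F y) (𝓝 0) (𝓝 (κ * F 0)) :=
    (continuous_const.mul hF).tendsto 0
  have h1 : 0 ≤ κ * F 0 := by
    refine ge_of_tendsto (hc.mono_left (nhdsWithin_le_nhds (s := Ioi 0))) ?_
    filter_upwards [self_mem_nhdsWithin] with y hy
    have hy : 0 < y := hy
    have := hfb y hy.ne'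
    have h2 : 0 < y * (κ * F y) := by linarith
    exact ((pos_iff_pos_of_mul_pos h2).1 hy).le
  have h2 : κ * F 0 ≤ 0 := by
    refine le_of_tendsto (hc.mono_left (nhdsWithin_le_nhds (s := Iio 0))) ?_
    filter_upwards [self_mem_nhdsWithin] with y hy
    have hy : y < 0 := hy
    have := hfb y hy.ne
    by_contra hcon
    push Not at hcon
    nlinarith
  rcases hκ with rfl | rfl <;> linarith

theorem nonlinear_core {n : ℕ} (hn : 0 < n) {X F : ℕ → ℝ → ℝ} {lam δ κ d : ℕ → ℝ}
    (hX : ∀ j, X (j % n) = X j) (hδm : ∀ j, δ (j % n) = δ j)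
    (hder : ∀ j t, 0 < t → HasDerivAt (X j) (-lam j * X j t + F j (X (j + 1) (t - δ j))) t)
    (hFc : ∀ j, Continuous (F j)) (hκ : ∀ j, κ j = 1 ∨ κ j = -1)
    (hfb : ∀ j y, y ≠ 0 → 0 < κ j * (y * F j y)) (hκp : ∏ j ∈ Finset.range n, κ j = -1)
    (hd : ∀ j, HasDerivAt (F j) (d j) 0) (hd0 : ∀ j, d j ≠ 0)
    (hlam : ∀ j, 0 < lam j) (hδ : ∀ j, 0 ≤ δ j) (hΔ : 0 < ∑ j ∈ Finset.range n, δ j)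
    {j0 : ℕ} {s : ℝ} (hs : 0 ≤ s) (hne : ∀ t, s ≤ t → X j0 t ≠ 0) :
    ∃ z : ℝ, ∏ j ∈ Finset.range n, (z + lam j)
      = (∏ j ∈ Finset.range n, d j) * Real.exp (-z * ∑ j ∈ Finset.range n, δ j) := by
  have hder1 : ∀ j t, (1 : ℝ) ≤ t →
      HasDerivAt (X j) (-lam j * X j t + F j (X (j + 1) (t - δ j))) t :=
    fun j t ht => hder j t (by linarith)
  have hF0 : ∀ j, F j 0 = 0 := fun j => feedback_zero (hκ j) (hFc j) (hfb j)
  have hshift : ∀ j, Tendsto (fun t : ℝ => t - δ j) atTop atTop := fun j =>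
    tendsto_atTop_add_const_right atTop (-δ j) tendsto_id
  -- eventual constant signs
  have hPstep : ∀ j, (∃ σ : ℝ, (σ = 1 ∨ σ = -1) ∧ ∀ᶠ t in atTop, 0 < σ * X (j + 1) t) →
      (∃ σ : ℝ, (σ = 1 ∨ σ = -1) ∧ ∀ᶠ t in atTop, 0 < σ * X j t) := by
    rintro j ⟨σ, hσ, he⟩
    have hg : ∀ᶠ t in atTop, 0 < κ j * σ * F j (X (j + 1) (t - δ j)) := by
      filter_upwards [(hshift j).eventually he] with t ht
      set Y := X (j + 1) (t - δ j)
      have hY : Y ≠ 0 := fun h => by simp [h] at ht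
      have h1 := hfb j Y hY
      have h2 : 0 < (σ * Y) * (κ j * σ * F j Y) := by
        rcases hσ with rfl | rfl <;> linarith
      exact (pos_iff_pos_of_mul_pos h2).1 ht
    have h3 := eventually_sign_of_forced (u := fun t => κ j * σ * X j t) (lam := lam j) (T := 1)
      (g := fun t => κ j * σ * F j (X (j + 1) (t - δ j)))
      (fun t ht => ((hder1 j t ht).const_mul (κ j * σ)).congr_deriv (by ring)) hg
    have hκσ : κ j * σ = 1 ∨ κ j * σ = -1 := by
      rcases hκ j with h | h <;> rcases hσ with h' | h' <;> rw [h, h'] <;> norm_num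
    rcases h3 with h3 | h3
    · exact ⟨κ j * σ, hκσ, h3⟩
    · refine ⟨-(κ j * σ), by rcases hκσ with h | h <;> rw [h] <;> norm_num, ?_⟩
      filter_upwards [h3] with t ht
      linarith
  have hP0 : ∃ σ : ℝ, (σ = 1 ∨ σ = -1) ∧ ∀ᶠ t in atTop, 0 < σ * X j0 t := by
    have hc : ContinuousOn (X j0) (Ici (s + 1)) := fun t ht =>
      (hder j0 t (by have : s + 1 ≤ t := ht
                     linarith)).continuousAt.continuousWithinAt
    rcases lt_or_gt_of_ne (hne (s + 1) (by linarith)) with h | h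
    · refine ⟨-1, Or.inr rfl, ?_⟩
      filter_upwards [eventually_ge_atTop (s + 1)] with t ht
      by_contra hcon
      have h1 : 0 ≤ X j0 t := by linarith
      obtain ⟨r, hr, hr0⟩ := intermediate_value_Icc ht (hc.mono Icc_subset_Ici_self) ⟨h.le, h1⟩
      exact hne r (by linarith [hr.1]) hr0
    · refine ⟨1, Or.inl rfl, ?_⟩
      filter_upwards [eventually_ge_atTop (s + 1)] with t ht
      by_contra hcon
      have h1 : X j0 t ≤ 0 := by linarith
      obtain ⟨r, hr, hr0⟩ := intermediate_value_Icc' ht (hc.mono Icc_subset_Ici_self) ⟨h1, h.le⟩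
      exact hne r (by linarith [hr.1]) hr0
  -- descent along the cycle
  have descend : ∀ P : (ℝ → ℝ) → Prop, (∀ j, P (X (j + 1)) → P (X j)) →
      ∀ i, P (X i) → ∀ j, P (X j) := by
    intro P hP i hi j
    have h1 : ∀ m, P (X (j + m)) → P (X j) := by
      intro m
      induction m with
      | zero => exact id
      | succ m ih => exact fun h => ih (hP _ h)
    refine h1 (i + j * n - j) ?_
    have h2 : j + (i + j * n - j) = i + j * n := by
      have : j ≤ j * n := Nat.le_mul_of_pos_right j hn
      omega
    rw [h2, ← hX, Nat.add_mul_mod_self_right, hX]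
    exact hi
  have hPall := descend (fun u => ∃ σ : ℝ, (σ = 1 ∨ σ = -1) ∧ ∀ᶠ t in atTop, 0 < σ * u t)
    hPstep j0 hP0
  choose σ' hσ' hev' using hPall
  obtain ⟨σ, hσ, hσm, hev⟩ : ∃ σ : ℕ → ℝ, (∀ j, σ j = 1 ∨ σ j = -1) ∧ (∀ j, σ (j % n) = σ j) ∧
      ∀ j, ∀ᶠ t in atTop, 0 < σ j * X j t := by
    refine ⟨fun j => σ' (j % n), fun j => hσ' _, fun j => by simp only [Nat.mod_mod], fun j => ?_⟩
    have := hev' (j % n)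
    rwa [hX] at this
  have hσ2 : ∀ j, σ j * σ j = 1 := fun j => by rcases hσ j with h | h <;> rw [h] <;> norm_num
  have hκ2 : ∀ j, κ j * κ j = 1 := fun j => by rcases hκ j with h | h <;> rw [h] <;> norm_num
  have hσn : ∏ j ∈ Finset.range n, σ (j + 1) = ∏ j ∈ Finset.range n, σ j := by
    have q1 := Finset.prod_range_succ σ n
    have q0 : σ n = σ 0 := by rw [← hσm n, Nat.mod_self]
    rw [Finset.prod_range_succ', q0] at q1
    refine mul_right_cancel₀ ?_ q1
    rcases hσ 0 with h | h <;> rw [h] <;> norm_num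
  have hσp : (∏ j ∈ Finset.range n, σ j) * (∏ j ∈ Finset.range n, σ j) = 1 := by
    rw [← Finset.prod_mul_distrib]
    exact Finset.prod_eq_one fun j _ => hσ2 j
  -- a mismatched index
  obtain ⟨i, hi⟩ : ∃ i, σ i * κ i * σ (i + 1) = -1 := by
    by_contra hcon
    push Not at hcon
    have h1 : ∀ j ∈ Finset.range n, σ j * κ j * σ (j + 1) = 1 := by
      intro j _
      have := hcon j
      rcases hσ j with h | h <;> rcases hκ j with h' | h' <;> rcases hσ (j + 1) with h'' | h'' <;>
        first
          | (rw [h, h', h'']; norm_num; done)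
          | (exfalso; apply this; rw [h, h', h'']; norm_num; done)
    have h2 := Finset.prod_eq_one h1
    rw [Finset.prod_mul_distrib, Finset.prod_mul_distrib, hκp, hσn] at h2
    linarith
  have hXi : Tendsto (X i) atTop (𝓝 0) := by
    have h1 : Tendsto (fun t => σ i * X i t) atTop (𝓝 0) := by
      refine tendsto_zero_mismatch (lam := lam i) (T := 1)
        (g := fun t => σ i * F i (X (i + 1) (t - δ i))) (hlam i)
        (fun t ht => ((hder1 i t ht).const_mul (σ i)).congr_deriv (by ring)) (hev i) ?_
      filter_upwards [(hshift i).eventually (hev (i + 1))] with t ht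
      set Y := X (i + 1) (t - δ i)
      have hY : Y ≠ 0 := fun h => by simp [h] at ht
      have h1 := hfb i Y hY
      have h2 : 0 < (σ (i + 1) * Y) * (κ i * σ (i + 1) * F i Y) := by
        have : (σ (i + 1) * Y) * (κ i * σ (i + 1) * F i Y)
          = (σ (i + 1) * σ (i + 1)) * (κ i * (Y * F i Y)) := by ring
        rw [this, hσ2, one_mul]; exact h1
      have h3 := (pos_iff_pos_of_mul_pos h2).1 ht
      have h4 : σ i * F i Y = (σ i * κ i * σ (i + 1)) * (κ i * σ (i + 1) * F i Y) := by
        have : (σ i * κ i * σ (i + 1)) * (κ i * σ (i + 1) * F i Y)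
          = (κ i * κ i) * (σ (i + 1) * σ (i + 1)) * (σ i * F i Y) := by ring
        rw [this, hσ2, hκ2]; ring
      rw [h4, hi]; linarith
    have h2 := h1.const_mul (σ i)
    simpa [← mul_assoc, hσ2] using h2
  have hXz : ∀ j, Tendsto (X j) atTop (𝓝 0) := by
    refine descend (fun u => Tendsto u atTop (𝓝 0)) (fun j hj => ?_) i hXi
    refine tendsto_zero_forced (hlam j) (hder1 j) ?_
    have := ((hFc j).tendsto 0).comp (hj.comp (hshift j))
    rw [hF0] at this
    exact this
  -- common starting time
  obtain ⟨T0, hT0⟩ : ∃ T0 : ℝ, ∀ j t, T0 ≤ t → 1 ≤ t - δ j ∧ 0 < σ j * X j t := by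
    have h1 : ∀ᶠ t in atTop, ∀ j ∈ Finset.range n, 1 ≤ t - δ j ∧ 0 < σ j * X j t := by
      rw [Filter.eventually_all_finset]
      intro j _
      exact ((hshift j).eventually (eventually_ge_atTop 1)).and (hev j)
    obtain ⟨T0, h2⟩ := eventually_atTop.1 h1
    refine ⟨T0, fun j t ht => ?_⟩
    have := h2 t ht (j % n) (Finset.mem_range.2 (Nat.mod_lt _ hn))
    rwa [hδm, hσm, hX] at this
  have hT1 : ∀ t, T0 ≤ t → 1 ≤ t := fun t ht => by linarith [(hT0 0 t ht).1, hδ 0]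
  obtain ⟨z, hz⟩ := linear_core hn (y := fun j t => σ j * X j t)
    (h := fun j t => σ j * F j (X (j + 1) (t - δ j))) (lam := lam)
    (C := fun j => σ j * σ (j + 1) * d j) (δ := δ) (T0 := T0)
    (fun j => by
      have e1 : σ (j + n) = σ j := by rw [← hσm (j + n), Nat.add_mod_right, hσm]
      have e2 : X (j + n) = X j := by rw [← hX (j + n), Nat.add_mod_right, hX]
      simp only [e1, e2])
    hlam hδ hΔ (fun j t ht => (hT0 j t ht).2)
    (fun j t ht => ((hder1 j t (hT1 t ht)).const_mul (σ j)).congr_deriv (by ring))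
    (fun j => by
      refine continuousOn_const.mul ((hFc j).comp_continuousOn fun t ht => ?_)
      have h1 := (hT0 j t ht).1
      have h2 : ContinuousAt (X (j + 1)) (t - δ j) := (hder1 (j + 1) _ h1).continuousAt
      exact (ContinuousAt.comp (f := fun t => t - δ j) h2 (by fun_prop)).continuousWithinAt)
    (fun j ε hε => by
      have h1 := (hd j).isLittleO.def hε
      have h2 := ((hXz (j + 1)).comp (hshift j)).eventually h1
      filter_upwards [h2, (hshift j).eventually (hev (j + 1))] with t h3 h4
      simp only [Function.comp, hF0, sub_zero, smul_eq_mul, Real.norm_eq_abs] at h3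
      set Y := X (j + 1) (t - δ j)
      have e1 : σ j * F j Y - σ j * σ (j + 1) * d j * (σ (j + 1) * Y)
          = σ j * (F j Y - Y * d j) := by
        have : σ j * F j Y - σ j * σ (j + 1) * d j * (σ (j + 1) * Y)
          = σ j * F j Y - (σ (j + 1) * σ (j + 1)) * (σ j * d j * Y) := by ring
        rw [this, hσ2]; ring
      have habs : ∀ k, |σ k| = 1 := fun k => by rcases hσ k with h | h <;> rw [h] <;> simp
      have e2 : |Y| = σ (j + 1) * Y := by
        rw [← abs_of_pos h4, abs_mul, habs, one_mul]
      rw [e1, abs_mul, habs, one_mul, ← e2]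
      exact h3)
    (fun j => by
      have : ∀ k, σ k ≠ 0 := fun k => by rcases hσ k with h | h <;> rw [h] <;> norm_num
      exact mul_ne_zero (mul_ne_zero (this _) (this _)) (hd0 j))
    (fun j => by simpa using (hXz j).const_mul (σ j))
  refine ⟨z, hz.trans ?_⟩
  rw [Finset.prod_mul_distrib, Finset.prod_mul_distrib, Finset.prod_mul_distrib, hσn, hσp, one_mul,
    ← Real.exp_sum, Finset.mul_sum]

/-- Theorem 1: if each `fⱼ` is differentiable near `0` with Hölder continuous
derivative and `fⱼ'(0) ≠ 0`, and the characteristic equation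
`(z+λ₁)⋯(z+λₙ) + a e^{-τz} = 0` with `a = -f₁'(0)⋯fₙ'(0)` has no real roots,
then every solution of the cyclic system oscillates about zero: each component
has an unbounded set of zeros. -/
theorem all_solutions_oscillate_of_no_real_roots
    (n : ℕ) (hn : 0 < n) (lam : ℕ → ℝ) (hlam : ∀ j < n, 0 < lam j)
    (τ : ℝ) (hτ : 0 < τ) (f : ℕ → ℝ → ℝ) (hf : ∀ j < n, Continuous (f j))
    (hpos : ∀ j < n - 1, ∀ y : ℝ, y ≠ 0 → 0 < y * f j y)
    (hneg : ∀ y : ℝ, y ≠ 0 → y * f (n - 1) y < 0)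
    (M : ℝ) (hM : 0 < M) (hbdd : ∀ y : ℝ, f (n - 1) y ≤ M)
    (α : ℝ) (hα : α ∈ Set.Ioc (0 : ℝ) 1)
    (hholder : ∀ j < n, ∃ δ : ℝ, 0 < δ ∧ ∃ C : ℝ, 0 ≤ C ∧
      (∀ y ∈ Set.Ioo (-δ) δ, DifferentiableAt ℝ (f j) y) ∧
      (∀ y ∈ Set.Ioo (-δ) δ, ∀ z ∈ Set.Ioo (-δ) δ,
        |deriv (f j) y - deriv (f j) z| ≤ C * |y - z| ^ α))
    (hderiv0 : ∀ j < n, deriv (f j) 0 ≠ 0)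
    (hnoreal : ∀ z : ℝ,
      (∏ j ∈ Finset.range n, (z + lam j))
        + (-(∏ j ∈ Finset.range n, deriv (f j) 0)) * Real.exp (-τ * z) ≠ 0) :
    ∀ x : ℕ → ℝ → ℝ, IsCyclicSolution n lam τ f 0 x →
      ∀ j < n, ∀ s : ℝ, 0 ≤ s → ∃ t : ℝ, s ≤ t ∧ x j t = 0 := by
  intro x hx j hj s hs
  by_contra hcon
  push Not at hcon
  obtain ⟨hx0, hxc, hxd⟩ := hx
  have hmod : ∀ j, j % n < n := fun j => Nat.mod_lt _ hn
  have hlast : ∀ i ∈ Finset.range (n - 1), i % n ≠ n - 1 := by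
    intro i hi
    have := Finset.mem_range.1 hi
    rw [Nat.mod_eq_of_lt (by omega)]; omega
  have hn1 : (n - 1) % n = n - 1 := Nat.mod_eq_of_lt (by omega)
  have hsplit : n = n - 1 + 1 := by omega
  have hΔ : ∑ j ∈ Finset.range n, (if j % n = n - 1 then τ else 0) = τ := by
    rw [show Finset.range n = Finset.range (n - 1 + 1) by rw [← hsplit], Finset.sum_range_succ,
      Finset.sum_eq_zero (fun i hi => if_neg (hlast i hi)), hn1]
    simp
  have hκp : ∏ j ∈ Finset.range n, (if j % n = n - 1 then (-1 : ℝ) else 1) = -1 := by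
    rw [show Finset.range n = Finset.range (n - 1 + 1) by rw [← hsplit], Finset.prod_range_succ,
      Finset.prod_eq_one (fun i hi => if_neg (hlast i hi)), hn1]
    simp
  obtain ⟨z, hz⟩ := nonlinear_core hn (X := fun j => x (j % n)) (F := fun j => f (j % n))
    (lam := fun j => lam (j % n)) (δ := fun j => if j % n = n - 1 then τ else 0)
    (κ := fun j => if j % n = n - 1 then (-1 : ℝ) else 1) (d := fun j => deriv (f (j % n)) 0)
    (fun j => by simp only [Nat.mod_mod]) (fun j => by simp only [Nat.mod_mod])
    (fun j t ht => by
      obtain ⟨h1, h2⟩ := hxd t ht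
      by_cases hjn : j % n = n - 1
      · have e : (j + 1) % n = 0 := by
          rw [← Nat.mod_add_mod, hjn, Nat.sub_add_cancel hn, Nat.mod_self]
        simp only [hjn, e, if_true]
        exact h2
      · have hlt : j % n + 1 < n := by have := hmod j; omega
        have e : (j + 1) % n = j % n + 1 := by
          rw [← Nat.mod_add_mod, Nat.mod_eq_of_lt hlt]
        simp only [hjn, e, if_false, sub_zero]
        exact h1 _ hlt)
    (fun j => hf _ (hmod j))
    (fun j => by by_cases h : j % n = n - 1 <;> simp [h])
    (fun j y hy => by
      by_cases h : j % n = n - 1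
      · simp only [h, if_true]
        linarith [hneg y hy]
      · simp only [h, if_false]
        have := hpos (j % n) (by have := hmod j; omega) y hy
        linarith)
    hκp
    (fun j => by
      obtain ⟨δ, hδ, C, _, hdiff, _⟩ := hholder (j % n) (hmod j)
      exact (hdiff 0 ⟨by linarith, hδ⟩).hasDerivAt)
    (fun j => hderiv0 _ (hmod j)) (fun j => hlam _ (hmod j))
    (fun j => by by_cases h : j % n = n - 1 <;> simp [h, hτ.le])
    (by rw [hΔ]; exact hτ) (j0 := j) (s := s) hs
    (fun t ht => by
      simp only [Nat.mod_eq_of_lt hj]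
      exact hcon t ht)
  rw [hΔ] at hz
  have e1 : ∏ j ∈ Finset.range n, (z + lam (j % n)) = ∏ j ∈ Finset.range n, (z + lam j) :=
    Finset.prod_congr rfl fun i hi => by rw [Nat.mod_eq_of_lt (Finset.mem_range.1 hi)]
  have e2 : ∏ j ∈ Finset.range n, deriv (f (j % n)) 0 = ∏ j ∈ Finset.range n, deriv (f j) 0 :=
    Finset.prod_congr rfl fun i hi => by rw [Nat.mod_eq_of_lt (Finset.mem_range.1 hi)]
  rw [e1, e2] at hz
  refine hnoreal z ?_
  rw [hz]
  have : -z * τ = -τ * z := by ring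
  rw [this]; ring
end

section
/- Let n be a positive integer, λ_1,…,λ_n positive reals, τ > 0, and f_1,…,f_n : ℝ → ℝ continuous, with f_j satisfying positive feedback for 1 ≤ j ≤ n−1 and f_n satisfying negative feedback. Assume each f_j is C² in a neighborhood of 0 with f_j′(0) ≠ 0, and set a = −f_1′(0)·f_2′(0)·⋯·f_n′(0) (so a > 0). If the characteristic equation (z+λ_1)(z+λ_2)⋯(z+λ_n) + a·e^{−τz} = 0 has a real (necessarily negative) root, then there exist T ∈ ℝ and a solution x = (x_1,…,x_n) of the cyclic system on [T,∞) such that x_j(t) ≠ 0 for every j = 1,…,n and every t ≥ T; in particular the system has a nonzero non-oscillating solution. -/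
open Filter Topology MeasureTheory Set
def CycAdm (h : ℝ → ℝ) : Prop := Measurable h ∧ ∀ t, |h t| ≤ 4

lemma CycAdm.ii {h : ℝ → ℝ} (hh : CycAdm h) (m a b : ℝ) :
    IntervalIntegrable (fun s => Real.exp (m * s) * h s) volume a b := by
  have h1 : IntervalIntegrable (fun s => 4 * Real.exp (m * s)) volume a b :=
    (by fun_prop : Continuous fun s => 4 * Real.exp (m * s)).intervalIntegrable _ _
  refine h1.mono_fun ?_ ?_
  · exact ((by fun_prop : Measurable fun s => Real.exp (m * s)).mul hh.1).aestronglyMeasurable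
  · refine Eventually.of_forall fun s => ?_
    have := hh.2 s
    simp only [norm_mul, Real.norm_eq_abs, Real.abs_exp]
    rw [abs_of_pos (by norm_num : (0:ℝ) < 4), mul_comm]
    exact mul_le_mul_of_nonneg_right this (Real.exp_pos _).le

lemma CycAdm.iIoi {h : ℝ → ℝ} (hh : CycAdm h) {m : ℝ} (hm : m < 0) (a : ℝ) :
    IntegrableOn (fun s => Real.exp (m * s) * h s) (Ioi a) := by
  have h1 : IntegrableOn (fun s => 4 * Real.exp (m * s)) (Ioi a) :=
    (integrableOn_exp_mul_Ioi hm a).const_mul 4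
  refine Integrable.mono h1 ?_ ?_
  · exact ((by fun_prop : Measurable fun s => Real.exp (m * s)).mul hh.1).aestronglyMeasurable
  · refine Eventually.of_forall fun s => ?_
    have := hh.2 s
    simp only [norm_mul, Real.norm_eq_abs, Real.abs_exp]
    rw [abs_of_pos (by norm_num : (0:ℝ) < 4), mul_comm]
    exact mul_le_mul_of_nonneg_right this (Real.exp_pos _).le

lemma cyc_V_cont {h : ℝ → ℝ} (hh : CycAdm h) (m S C : ℝ) :
    Continuous fun t => Real.exp (-m * t) * (C + m * ∫ s in S..t, Real.exp (m * s) * h s) := by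
  have := intervalIntegral.continuous_primitive (fun a b => hh.ii m a b) S
  fun_prop

lemma cyc_V_deriv {h : ℝ → ℝ} (hh : CycAdm h) (m S C t : ℝ) (hc : ContinuousAt h t) :
    HasDerivAt (fun t => Real.exp (-m * t) * (C + m * ∫ s in S..t, Real.exp (m * s) * h s))
      (-m * (Real.exp (-m * t) * (C + m * ∫ s in S..t, Real.exp (m * s) * h s) - h t)) t := by
  have h1 : HasDerivAt (fun t => ∫ s in S..t, Real.exp (m * s) * h s) (Real.exp (m * t) * h t) t := by
    apply intervalIntegral.integral_hasDerivAt_right (hh.ii m S t)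
    · exact ((by fun_prop : Measurable fun s => Real.exp (m * s)).mul
        hh.1).stronglyMeasurable.stronglyMeasurableAtFilter
    · exact (by fun_prop : ContinuousAt (fun s => Real.exp (m * s)) t).mul hc
  have h2 : HasDerivAt (fun t => Real.exp (-m * t)) (Real.exp (-m * t) * (-m)) t := by
    have := ((hasDerivAt_id t).const_mul (-m)).exp
    simpa using this
  have h3 := h2.mul ((h1.const_mul m).const_add C)
  refine h3.congr_deriv ?_
  have e : Real.exp (-m * t) * Real.exp (m * t) = 1 := by rw [← Real.exp_add]; simp
  linear_combination (m * h t) * e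

lemma cyc_V_tendsto (h : ℕ → ℝ → ℝ) (g : ℝ → ℝ) (hh : ∀ k, CycAdm (h k))
    (hlim : ∀ s, Tendsto (fun k => h k s) atTop (𝓝 (g s))) (m S t : ℝ) :
    Tendsto (fun k => ∫ s in S..t, Real.exp (m * s) * h k s) atTop
      (𝓝 (∫ s in S..t, Real.exp (m * s) * g s)) := by
  apply intervalIntegral.tendsto_integral_filter_of_dominated_convergence
    (fun s => 4 * Real.exp (m * s))
  · exact Eventually.of_forall fun k => ((by fun_prop : Measurable fun s => Real.exp (m * s)).mul
      (hh k).1).aestronglyMeasurable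
  · refine Eventually.of_forall fun k => Eventually.of_forall fun s _ => ?_
    have := (hh k).2 s
    simp only [norm_mul, Real.norm_eq_abs, Real.abs_exp]
    rw [mul_comm]
    exact mul_le_mul_of_nonneg_right this (Real.exp_pos _).le
  · exact (by fun_prop : Continuous fun s => 4 * Real.exp (m * s)).intervalIntegrable _ _
  · exact Eventually.of_forall fun s _ => (hlim s).const_mul _

lemma cyc_Ioi_tendsto (h : ℕ → ℝ → ℝ) (g : ℝ → ℝ) (hh : ∀ k, CycAdm (h k))
    (hlim : ∀ s, Tendsto (fun k => h k s) atTop (𝓝 (g s))) (m S : ℝ) (hm : m < 0) :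
    Tendsto (fun k => ∫ s in Ioi S, Real.exp (m * s) * h k s) atTop
      (𝓝 (∫ s in Ioi S, Real.exp (m * s) * g s)) := by
  apply tendsto_integral_of_dominated_convergence (fun s => 4 * Real.exp (m * s))
  · exact fun k => ((by fun_prop : Measurable fun s => Real.exp (m * s)).mul
      (hh k).1).aestronglyMeasurable
  · exact (integrableOn_exp_mul_Ioi hm S).const_mul 4
  · refine fun k => Eventually.of_forall fun s => ?_
    have := (hh k).2 s
    simp only [norm_mul, Real.norm_eq_abs, Real.abs_exp]
    rw [mul_comm]
    exact mul_le_mul_of_nonneg_right this (Real.exp_pos _).le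
  · exact Eventually.of_forall fun s => (hlim s).const_mul _

lemma cyc_lin_ii (m δ κ b S t : ℝ) (hm : m ≠ 0) (hmδ : m ≠ δ) :
    m * ∫ s in S..t, Real.exp (m * s) * (κ + b * Real.exp (-δ * s)) =
      Real.exp (m * t) * (κ + b * (m / (m - δ)) * Real.exp (-δ * t)) -
      Real.exp (m * S) * (κ + b * (m / (m - δ)) * Real.exp (-δ * S)) := by
  rw [← intervalIntegral.integral_const_mul]
  have hne : m - δ ≠ 0 := sub_ne_zero.2 hmδ
  rw [intervalIntegral.integral_eq_sub_of_hasDerivAt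
    (f := fun s => Real.exp (m * s) * (κ + b * (m / (m - δ)) * Real.exp (-δ * s)))]
  · intro x _
    have h1 : HasDerivAt (fun t => Real.exp (m * t)) (Real.exp (m * x) * m) x := by
      simpa using ((hasDerivAt_id x).const_mul m).exp
    have h2 : HasDerivAt (fun t => Real.exp (-δ * t)) (Real.exp (-δ * x) * (-δ)) x := by
      have := ((hasDerivAt_id x).const_mul (-δ)).exp
      simpa using this
    refine (h1.mul ((h2.const_mul (b * (m / (m - δ)))).const_add κ)).congr_deriv ?_
    field_simp
    ring
  · exact (by fun_prop : Continuous _).intervalIntegrable _ _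

lemma cyc_lin_integrable (m δ κ b t : ℝ) (hm : m < 0) (hδ : 0 < δ) :
    IntegrableOn (fun s => Real.exp (m * s) * (κ + b * Real.exp (-δ * s))) (Ioi t) := by
  have e : (fun s => Real.exp (m * s) * (κ + b * Real.exp (-δ * s))) =
      fun s => κ * Real.exp (m * s) + b * Real.exp ((m - δ) * s) := by
    funext s
    have : Real.exp ((m - δ) * s) = Real.exp (m * s) * Real.exp (-δ * s) := by
      rw [← Real.exp_add]; ring_nf
    rw [this]; ring
  rw [e]
  exact ((integrableOn_exp_mul_Ioi hm t).const_mul κ).add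
    ((integrableOn_exp_mul_Ioi (by linarith : m - δ < 0) t).const_mul b)

lemma cyc_lin_Ioi (m δ κ b t : ℝ) (hm : m < 0) (hδ : 0 < δ) :
    -m * ∫ s in Ioi t, Real.exp (m * s) * (κ + b * Real.exp (-δ * s)) =
      Real.exp (m * t) * (κ + b * (m / (m - δ)) * Real.exp (-δ * t)) := by
  have e1 : ∀ s, Real.exp ((m - δ) * s) = Real.exp (m * s) * Real.exp (-δ * s) := by
    intro s; rw [← Real.exp_add]; ring_nf
  have e : (fun s => Real.exp (m * s) * (κ + b * Real.exp (-δ * s))) =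
      fun s => κ * Real.exp (m * s) + b * Real.exp ((m - δ) * s) := by
    funext s
    rw [e1]; ring
  have hne : m - δ < 0 := by linarith
  rw [e, integral_add ((integrableOn_exp_mul_Ioi hm t).const_mul κ)
    ((integrableOn_exp_mul_Ioi hne t).const_mul b), integral_const_mul, integral_const_mul,
    integral_exp_mul_Ioi hm, integral_exp_mul_Ioi hne, e1]
  have := hm.ne
  have := hne.ne
  field_simp
  ring

lemma cyc_avg (m S δ : ℝ) (hm : m ≠ 0) (hδ : 0 < δ) (hmδ : m ≠ δ) :
    ∃ A : (ℝ → ℝ) → ℝ → ℝ,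
      (∀ h, CycAdm h → Continuous (A h)) ∧
      (∀ h t, CycAdm h → ContinuousAt h t → HasDerivAt (A h) (-m * (A h t - h t)) t) ∧
      (∀ h h', CycAdm h → CycAdm h' → (∀ s, S ≤ s → h s ≤ h' s) →
        ∀ t, S ≤ t → A h t ≤ A h' t) ∧
      (∀ (h : ℕ → ℝ → ℝ) (g : ℝ → ℝ), (∀ k, CycAdm (h k)) →
        (∀ s, Tendsto (fun k => h k s) atTop (𝓝 (g s))) →
        ∀ t, Tendsto (fun k => A (h k) t) atTop (𝓝 (A g t))) ∧
      (∀ (h : ℝ → ℝ) (κ b : ℝ), CycAdm h → (∀ s, S ≤ s → κ + b * Real.exp (-δ * s) ≤ h s) →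
        κ + b * (m / (m - δ)) * Real.exp (-δ * S) ≤ 2 →
        ∀ t, S ≤ t → κ + b * (m / (m - δ)) * Real.exp (-δ * t) ≤ A h t) ∧
      (∀ (h : ℝ → ℝ) (κ b : ℝ), CycAdm h → (∀ s, S ≤ s → h s ≤ κ + b * Real.exp (-δ * s)) →
        2 ≤ κ + b * (m / (m - δ)) * Real.exp (-δ * S) →
        ∀ t, S ≤ t → A h t ≤ κ + b * (m / (m - δ)) * Real.exp (-δ * t)) := by
  have ee : ∀ t, Real.exp (-m * t) * Real.exp (m * t) = 1 := by
    intro t; rw [← Real.exp_add]; simp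
  rcases lt_or_gt_of_ne hm with hm0 | hm0
  · refine ⟨fun h t => Real.exp (-m * t) * ((-m * ∫ s in Ioi S, Real.exp (m * s) * h s) +
      m * ∫ s in S..t, Real.exp (m * s) * h s), ?_⟩
    have alt : ∀ h t, CycAdm h → Real.exp (-m * t) * ((-m * ∫ s in Ioi S, Real.exp (m * s) * h s) +
      m * ∫ s in S..t, Real.exp (m * s) * h s) =
        Real.exp (-m * t) * (-m * ∫ s in Ioi t, Real.exp (m * s) * h s) := by
      intro h t hh
      rw [← intervalIntegral.integral_interval_add_Ioi (hh.iIoi hm0 S) (hh.iIoi hm0 t)]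
      ring
    refine ⟨fun h hh => cyc_V_cont hh _ _ _, fun h t hh hc => cyc_V_deriv hh _ _ _ _ hc,
      ?_, ?_, ?_, ?_⟩
    · intro h h' hh hh' hle t ht
      simp only [alt _ _ hh, alt _ _ hh']
      apply mul_le_mul_of_nonneg_left _ (Real.exp_pos _).le
      apply mul_le_mul_of_nonneg_left _ (by linarith)
      apply setIntegral_mono_on (hh.iIoi hm0 t) (hh'.iIoi hm0 t) measurableSet_Ioi
      intro s hs
      exact mul_le_mul_of_nonneg_left (hle s (ht.trans (le_of_lt hs))) (Real.exp_pos _).le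
    · intro h g hh hlim t
      exact (((cyc_Ioi_tendsto h g hh hlim m S hm0).const_mul _).add
        ((cyc_V_tendsto h g hh hlim m S t).const_mul _)).const_mul _
    · intro h κ b hh hle _ t ht
      simp only [alt _ _ hh]
      have e := cyc_lin_Ioi m δ κ b t hm0 hδ
      have e2 : κ + b * (m / (m - δ)) * Real.exp (-δ * t) = Real.exp (-m * t) *
          (-m * ∫ s in Ioi t, Real.exp (m * s) * (κ + b * Real.exp (-δ * s))) := by
        rw [e, ← mul_assoc, ee, one_mul]
      rw [e2]
      apply mul_le_mul_of_nonneg_left _ (Real.exp_pos _).le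
      apply mul_le_mul_of_nonneg_left _ (by linarith)
      apply setIntegral_mono_on (cyc_lin_integrable m δ κ b t hm0 hδ) (hh.iIoi hm0 t)
        measurableSet_Ioi
      intro s hs
      exact mul_le_mul_of_nonneg_left (hle s (ht.trans (le_of_lt hs))) (Real.exp_pos _).le
    · intro h κ b hh hle _ t ht
      simp only [alt _ _ hh]
      have e := cyc_lin_Ioi m δ κ b t hm0 hδ
      have e2 : κ + b * (m / (m - δ)) * Real.exp (-δ * t) = Real.exp (-m * t) *
          (-m * ∫ s in Ioi t, Real.exp (m * s) * (κ + b * Real.exp (-δ * s))) := by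
        rw [e, ← mul_assoc, ee, one_mul]
      rw [e2]
      apply mul_le_mul_of_nonneg_left _ (Real.exp_pos _).le
      apply mul_le_mul_of_nonneg_left _ (by linarith)
      apply setIntegral_mono_on (hh.iIoi hm0 t) (cyc_lin_integrable m δ κ b t hm0 hδ)
        measurableSet_Ioi
      intro s hs
      exact mul_le_mul_of_nonneg_left (hle s (ht.trans (le_of_lt hs))) (Real.exp_pos _).le
  · refine ⟨fun h t => Real.exp (-m * t) * (Real.exp (m * S) * 2 +
      m * ∫ s in S..t, Real.exp (m * s) * h s), ?_⟩
    have linii : ∀ κ b t, IntervalIntegrable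
        (fun s => Real.exp (m * s) * (κ + b * Real.exp (-δ * s))) volume S t := fun κ b t =>
      (by fun_prop : Continuous _).intervalIntegrable _ _
    refine ⟨fun h hh => cyc_V_cont hh _ _ _, fun h t hh hc => cyc_V_deriv hh _ _ _ _ hc,
      ?_, ?_, ?_, ?_⟩
    · intro h h' hh hh' hle t ht
      apply mul_le_mul_of_nonneg_left _ (Real.exp_pos _).le
      apply add_le_add_right
      apply mul_le_mul_of_nonneg_left _ hm0.le
      apply intervalIntegral.integral_mono_on ht (hh.ii m S t) (hh'.ii m S t)
      intro s hs
      exact mul_le_mul_of_nonneg_left (hle s hs.1) (Real.exp_pos _).le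
    · intro h g hh hlim t
      exact (((cyc_V_tendsto h g hh hlim m S t).const_mul _).const_add _).const_mul _
    · intro h κ b hh hle hS t ht
      have e := cyc_lin_ii m δ κ b S t hm hmδ
      have i1 : m * ∫ s in S..t, Real.exp (m * s) * (κ + b * Real.exp (-δ * s)) ≤
          m * ∫ s in S..t, Real.exp (m * s) * h s := by
        apply mul_le_mul_of_nonneg_left _ hm0.le
        apply intervalIntegral.integral_mono_on ht (linii _ _ _) (hh.ii m S t)
        intro s hs
        exact mul_le_mul_of_nonneg_left (hle s hs.1) (Real.exp_pos _).le
      have i2 := mul_le_mul_of_nonneg_left hS (Real.exp_pos (m * S)).le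
      have e2 : κ + b * (m / (m - δ)) * Real.exp (-δ * t) = Real.exp (-m * t) *
          (Real.exp (m * t) * (κ + b * (m / (m - δ)) * Real.exp (-δ * t))) := by
        rw [← mul_assoc, ee, one_mul]
      rw [e2]
      apply mul_le_mul_of_nonneg_left _ (Real.exp_pos _).le
      linarith
    · intro h κ b hh hle hS t ht
      have e := cyc_lin_ii m δ κ b S t hm hmδ
      have i1 : m * ∫ s in S..t, Real.exp (m * s) * h s ≤
          m * ∫ s in S..t, Real.exp (m * s) * (κ + b * Real.exp (-δ * s)) := by
        apply mul_le_mul_of_nonneg_left _ hm0.le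
        apply intervalIntegral.integral_mono_on ht (hh.ii m S t) (linii _ _ _)
        intro s hs
        exact mul_le_mul_of_nonneg_left (hle s hs.1) (Real.exp_pos _).le
      have i2 := mul_le_mul_of_nonneg_left hS (Real.exp_pos (m * S)).le
      have e2 : κ + b * (m / (m - δ)) * Real.exp (-δ * t) = Real.exp (-m * t) *
          (Real.exp (m * t) * (κ + b * (m / (m - δ)) * Real.exp (-δ * t))) := by
        rw [← mul_assoc, ee, one_mul]
      rw [e2]
      apply mul_le_mul_of_nonneg_left _ (Real.exp_pos _).le
      linarith

lemma cyc_fixed {ι : Type*} (lo hi : ι → ℝ → ℝ) (N : (ι → ℝ → ℝ) → ι → ℝ → ℝ)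
    (hlohi : ∀ j t, lo j t ≤ hi j t) (hlo : ∀ j, Measurable (lo j))
    (hmap : ∀ w : ι → ℝ → ℝ, (∀ j, Measurable (w j)) → (∀ j t, lo j t ≤ w j t ∧ w j t ≤ hi j t) →
      (∀ j, Measurable (N w j)) ∧ (∀ j t, lo j t ≤ N w j t ∧ N w j t ≤ hi j t))
    (hmono : ∀ w v : ι → ℝ → ℝ, (∀ j, Measurable (w j)) →
      (∀ j t, lo j t ≤ w j t ∧ w j t ≤ hi j t) →
      (∀ j, Measurable (v j)) → (∀ j t, lo j t ≤ v j t ∧ v j t ≤ hi j t) →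
      (∀ j t, w j t ≤ v j t) → ∀ j t, N w j t ≤ N v j t)
    (hcont : ∀ (w : ℕ → ι → ℝ → ℝ) (v : ι → ℝ → ℝ), (∀ k j, Measurable (w k j)) →
      (∀ k j t, lo j t ≤ w k j t ∧ w k j t ≤ hi j t) →
      (∀ j, Measurable (v j)) → (∀ j t, lo j t ≤ v j t ∧ v j t ≤ hi j t) →
      (∀ j t, Tendsto (fun k => w k j t) atTop (𝓝 (v j t))) →
      ∀ j t, Tendsto (fun k => N (w k) j t) atTop (𝓝 (N v j t))) :
    ∃ w : ι → ℝ → ℝ, (∀ j, Measurable (w j)) ∧ (∀ j t, lo j t ≤ w j t ∧ w j t ≤ hi j t) ∧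
      N w = w := by
  let u : ℕ → ι → ℝ → ℝ := fun k => N^[k] lo
  have hu : ∀ k, u (k+1) = N (u k) := fun k => Function.iterate_succ_apply' N k lo
  have hD : ∀ k, (∀ j, Measurable (u k j)) ∧ (∀ j t, lo j t ≤ u k j t ∧ u k j t ≤ hi j t) := by
    intro k
    induction k with
    | zero => exact ⟨hlo, fun j t => ⟨le_refl _, hlohi j t⟩⟩
    | succ k ih => rw [hu]; exact hmap _ ih.1 ih.2
  have hstep : ∀ k j t, u k j t ≤ u (k+1) j t := by
    intro k
    induction k with
    | zero => exact fun j t => ((hD 1).2 j t).1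
    | succ k ih =>
      rw [hu (k+1)]
      nth_rewrite 1 [hu k]
      exact hmono _ _ (hD k).1 (hD k).2 (hD (k+1)).1 (hD (k+1)).2 ih
  have hmon : ∀ j t, Monotone (fun k => u k j t) := fun j t =>
    monotone_nat_of_le_succ (fun k => hstep k j t)
  let v : ι → ℝ → ℝ := fun j t => ⨆ k, u k j t
  have hv : ∀ j t, Tendsto (fun k => u k j t) atTop (𝓝 (v j t)) := fun j t =>
    tendsto_atTop_ciSup (hmon j t) ⟨hi j t, by rintro _ ⟨k, rfl⟩; exact ((hD k).2 j t).2⟩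
  have hvm : ∀ j, Measurable (v j) := fun j =>
    measurable_of_tendsto_metrizable (fun k => (hD k).1 j) (tendsto_pi_nhds.2 (hv j))
  have hvb : ∀ j t, lo j t ≤ v j t ∧ v j t ≤ hi j t := fun j t =>
    ⟨ge_of_tendsto' (hv j t) (fun k => ((hD k).2 j t).1),
      le_of_tendsto' (hv j t) (fun k => ((hD k).2 j t).2)⟩
  refine ⟨v, hvm, hvb, ?_⟩
  funext j t
  have h1 := hcont u v (fun k => (hD k).1) (fun k => (hD k).2) hvm hvb hv j t
  have h2 := (hv j t).comp (tendsto_add_atTop_nat 1)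
  refine tendsto_nhds_unique h1 (h2.congr fun k => ?_)
  simp only [Function.comp, hu]

lemma cyc_local (f : ℝ → ℝ) (h2 : ContDiffAt ℝ 2 f 0) (h0 : f 0 = 0) (hd : deriv f 0 ≠ 0) :
    ∃ η > 0, ∃ B ≥ 0, (∀ y, |y| ≤ η → |f y - deriv f 0 * y| ≤ B * y ^ 2) ∧
      MonotoneOn (fun y => f y / deriv f 0) (Icc (-η) η) := by
  have hdiff : ∀ᶠ y in 𝓝 (0:ℝ), DifferentiableAt ℝ f y := by
    filter_upwards [h2.eventually (by simp)] with y hy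
    exact hy.differentiableAt (by simp)
  have hd1 : ContDiffAt ℝ 1 (deriv f) 0 := by
    exact h2.derivWithin (m := 1) (by norm_num)
  have hO := (hd1.differentiableAt (by simp)).isBigO_sub
  obtain ⟨B, hB⟩ := hO.bound
  have hpos : ∀ᶠ y in 𝓝 (0:ℝ), 0 < deriv f y / deriv f 0 := by
    have : ContinuousAt (fun y => deriv f y / deriv f 0) 0 := hd1.continuousAt.div_const _
    exact this.eventually (lt_mem_nhds (by simp [hd]))
  obtain ⟨ε, hε, hball⟩ := Metric.eventually_nhds_iff.1 (hdiff.and (hB.and hpos))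
  have hb : ∀ y, |y| ≤ ε/2 → DifferentiableAt ℝ f y ∧ |deriv f y - deriv f 0| ≤ |B| * |y| ∧
      0 < deriv f y / deriv f 0 := by
    intro y hy
    have := @hball y (by rw [Real.dist_eq, sub_zero]; linarith)
    refine ⟨this.1, ?_, this.2.2⟩
    have h := this.2.1
    simp only [Real.norm_eq_abs, sub_zero] at h
    exact h.trans (mul_le_mul_of_nonneg_right (le_abs_self B) (abs_nonneg _))
  refine ⟨ε/2, by positivity, |B|, abs_nonneg _, ?_, ?_⟩
  · intro y hy
    have := (convex_Icc (-|y|) (|y|)).norm_image_sub_le_of_norm_hasDerivWithin_le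
      (f := fun y => f y - deriv f 0 * y) (f' := fun y => deriv f y - deriv f 0) (C := |B| * |y|)
      (x := 0) (y := y) ?_ ?_ ?_ ?_
    · simp only [h0, mul_zero, sub_zero, Real.norm_eq_abs] at this
      calc _ ≤ _ := this
        _ = |B| * |y|^2 := by ring
        _ = _ := by rw [sq_abs]
    · intro x hx
      have hx' : |x| ≤ |y| := abs_le.2 hx
      have := (hb x (hx'.trans hy)).1.hasDerivAt.sub ((hasDerivAt_id x).const_mul (deriv f 0))
      rw [mul_one] at this
      exact this.hasDerivWithinAt
    · intro x hx
      have hx' : |x| ≤ |y| := abs_le.2 hx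
      exact (hb x (hx'.trans hy)).2.1.trans (mul_le_mul_of_nonneg_left hx' (abs_nonneg _))
    · simp
    · exact ⟨neg_abs_le y, le_abs_self y⟩
  · apply monotoneOn_of_deriv_nonneg (convex_Icc _ _)
    · intro x hx
      exact ((hb x (abs_le.2 hx)).1.div_const _).continuousAt.continuousWithinAt
    · intro x hx
      rw [interior_Icc] at hx
      exact ((hb x (abs_le.2 ⟨hx.1.le, hx.2.le⟩)).1.div_const _).differentiableWithinAt
    · intro x hx
      rw [interior_Icc] at hx
      have := (hb x (abs_le.2 ⟨hx.1.le, hx.2.le⟩))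
      rw [deriv_div_const]
      exact this.2.2.le

lemma cyc_G (f : ℝ → ℝ) (d η B r : ℝ) (hd : d ≠ 0) (hr : r ≠ 0) (hrη : |r| * 4 ≤ η) (hB : 0 ≤ B)
    (h1 : ∀ y, |y| ≤ η → |f y - d * y| ≤ B * y ^ 2)
    (h2 : MonotoneOn (fun y => f y / d) (Icc (-η) η)) :
    MonotoneOn (fun w => f (r * w) / (d * r)) (Icc 0 4) ∧
    ∀ w ∈ Icc (0:ℝ) 4, |f (r * w) / (d * r) - w| ≤ (16 * B / |d|) * |r| := by
  have key : ∀ w ∈ Icc (0:ℝ) 4, |r * w| ≤ η := by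
    intro w hw
    rw [abs_mul, abs_of_nonneg hw.1]
    exact (mul_le_mul_of_nonneg_left hw.2 (abs_nonneg _)).trans hrη
  constructor
  · intro w hw v hv hwv
    have kw := abs_le.1 (key w hw)
    have kv := abs_le.1 (key v hv)
    simp only [← div_div]
    rcases lt_or_gt_of_ne hr with hr | hr
    · exact div_le_div_of_nonpos_of_le hr.le
        (h2 kv kw (mul_le_mul_of_nonpos_left hwv hr.le))
    · exact div_le_div_of_nonneg_right (h2 kw kv (mul_le_mul_of_nonneg_left hwv hr.le)) hr.le
  · intro w hw
    have e : f (r * w) / (d * r) - w = (f (r * w) - d * (r * w)) / (d * r) := by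
      field_simp
    rw [e, abs_div, abs_mul, div_le_iff₀ (by positivity)]
    refine (h1 _ (key w hw)).trans ?_
    have : 16 * B / |d| * |r| * (|d| * |r|) = B * (|r|^2 * 16) := by
      field_simp
    rw [this, sq_abs]
    apply mul_le_mul_of_nonneg_left _ hB
    rw [mul_pow]
    apply mul_le_mul_of_nonneg_left _ (sq_nonneg _)
    nlinarith [hw.1, hw.2]

lemma cyc_core (n : ℕ) (hn : 0 < n) (m : ℕ → ℝ) (τ δ S : ℝ) (a : ℕ → ℝ) (G : ℕ → ℝ → ℝ → ℝ)
    (hτ : 0 < τ) (hδ : 0 < δ) (hm : ∀ j < n, m j ≠ 0) (hmδ : ∀ j < n, m j ≠ δ)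
    (ha : ∀ j < n, a j = (a (j+1) + 1) * (m j / (m j - δ)))
    (han : a n = a 0 * Real.exp (δ * τ))
    (hS : ∀ j t, S ≤ t → |a j * Real.exp (-δ * t)| ≤ 1/2)
    (hS1 : ∀ t, S ≤ t → Real.exp (-δ * t) ≤ 1/2)
    (hGm : ∀ j < n, ∀ t, S ≤ t → MonotoneOn (G j t) (Icc 0 4))
    (hG : ∀ j < n, ∀ t, S ≤ t → ∀ w ∈ Icc (0:ℝ) 4, |G j t w - w| ≤ Real.exp (-δ * t))
    (hGc : ∀ j < n, Continuous (fun p : ℝ × ℝ => G j p.1 p.2)) :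
    ∃ w : ℕ → ℝ → ℝ, (∀ j < n, ContinuousOn (w j) (Ici S)) ∧
      (∀ j < n, ∀ t, S ≤ t → 1/2 ≤ w j t) ∧
      ∀ t, S + τ < t → ∀ j < n, HasDerivAt (w j)
        (-m j * (w j t - G j t (if j + 1 < n then w (j+1) t else w 0 (t - τ)))) t := by
  have hA := fun j (hj : j < n) => cyc_avg (m j) S δ (hm j hj) hδ (hmδ j hj)
  choose! A hA1 hA2 hA3 hA4 hA5 hA6 using hA
  let lo : ℕ → ℝ → ℝ := fun j t => if t < S then 2 else 1 - a j * Real.exp (-δ * t)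
  let hi : ℕ → ℝ → ℝ := fun j t => if t < S then 2 else 3 + a j * Real.exp (-δ * t)
  have lo1 : ∀ j t, S ≤ t → lo j t = 1 - a j * Real.exp (-δ * t) := fun j t ht =>
    if_neg (not_lt.2 ht)
  have hi1 : ∀ j t, S ≤ t → hi j t = 3 + a j * Real.exp (-δ * t) := fun j t ht =>
    if_neg (not_lt.2 ht)
  let H : (ℕ → ℝ → ℝ) → ℕ → ℝ → ℝ := fun w j s => if s < S then 2 else G j s (w (j+1) s)
  have H1 : ∀ w j s, S ≤ s → H w j s = G j s (w (j+1) s) := fun w j t ht =>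
    if_neg (not_lt.2 ht)
  let N : (ℕ → ℝ → ℝ) → ℕ → ℝ → ℝ := fun w j t =>
    if t < S then 2 else if j < n then A j (H w j) t else
      if j = n then (if t < S + τ then 2 else w 0 (t - τ)) else 2
  have hrange : ∀ (w : ℕ → ℝ → ℝ), (∀ j t, lo j t ≤ w j t ∧ w j t ≤ hi j t) →
      ∀ j t, S ≤ t → 1/2 ≤ w j t ∧ w j t ≤ 7/2 := by
    intro w hw j t ht
    have h1 := hw j t
    rw [lo1 _ _ ht, hi1 _ _ ht] at h1
    have h2 := abs_le.1 (hS j t ht)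
    constructor <;> linarith [h1.1, h1.2, h2.1, h2.2]
  have hadm : ∀ (w : ℕ → ℝ → ℝ), (∀ j, Measurable (w j)) →
      (∀ j t, lo j t ≤ w j t ∧ w j t ≤ hi j t) → ∀ j < n, CycAdm (H w j) := by
    intro w hwm hw j hj
    constructor
    · apply Measurable.ite measurableSet_Iio measurable_const
      exact (hGc j hj).measurable.comp (measurable_id.prodMk (hwm (j+1)))
    · intro t
      rcases lt_or_ge t S with ht | ht
      · simp only [H, if_pos ht]; norm_num
      · rw [H1 _ _ _ ht]
        have h1 := hrange w hw (j+1) t ht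
        have h2 := abs_le.1 (hG j hj t ht (w (j+1) t) ⟨by linarith, by linarith⟩)
        have h3 := hS1 t ht
        rw [abs_le]; constructor <;> linarith
  have hexp : ∀ t, a n * Real.exp (-δ * t) = a 0 * Real.exp (-δ * (t - τ)) := by
    intro t
    rw [han, mul_assoc, ← Real.exp_add]; ring_nf
  have key : ∃ w : ℕ → ℝ → ℝ, (∀ j, Measurable (w j)) ∧
      (∀ j t, lo j t ≤ w j t ∧ w j t ≤ hi j t) ∧ N w = w := by
    apply cyc_fixed lo hi N
    · intro j t
      rcases lt_or_ge t S with ht | ht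
      · simp only [lo, hi, if_pos ht]; exact le_refl _
      · rw [lo1 _ _ ht, hi1 _ _ ht]
        have h2 := abs_le.1 (hS j t ht)
        linarith [h2.1, h2.2]
    · intro j
      exact Measurable.ite measurableSet_Iio measurable_const (by fun_prop)
    · intro w hwm hw
      constructor
      · intro j
        apply Measurable.ite measurableSet_Iio measurable_const
        by_cases hj : j < n
        · simp only [if_pos hj]
          exact (hA1 j hj _ (hadm w hwm hw j hj)).measurable
        · simp only [if_neg hj]
          by_cases hj' : j = n
          · simp only [if_pos hj']
            apply Measurable.ite measurableSet_Iio measurable_const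
            exact (hwm 0).comp (measurable_id.sub_const τ)
          · simp only [if_neg hj']
            exact measurable_const
      · intro j t
        rcases lt_or_ge t S with ht | ht
        · simp only [lo, hi, N, if_pos ht]; exact ⟨le_refl _, le_refl _⟩
        rw [lo1 _ _ ht, hi1 _ _ ht]
        have habs := abs_le.1 (hS j t ht)
        simp only [N, if_neg (not_lt.2 ht)]
        by_cases hj : j < n
        · simp only [if_pos hj]
          have hSS := abs_le.1 (hS j S le_rfl)
          have hb : ∀ s, S ≤ s → |H w j s - w (j+1) s| ≤ Real.exp (-δ * s) := by
            intro s hs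
            have h1 := hrange w hw (j+1) s hs
            rw [H1 _ _ _ hs]
            exact hG j hj s hs _ ⟨by linarith, by linarith⟩
          have e1 : -(a (j+1) + 1) * (m j / (m j - δ)) = - a j := by rw [ha j hj]; ring
          have e2 := (ha j hj).symm
          constructor
          · have := hA5 j hj (H w j) 1 (-(a (j+1) + 1)) (hadm w hwm hw j hj) ?_ ?_ t ht
            · rw [e1] at this; linarith
            · intro s hs
              have h1 := (hw (j+1) s).1
              rw [lo1 _ _ hs] at h1
              have := (abs_le.1 (hb s hs)).1
              linarith
            · rw [e1]; linarith [hSS.1, hSS.2]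
          · have := hA6 j hj (H w j) 3 (a (j+1) + 1) (hadm w hwm hw j hj) ?_ ?_ t ht
            · rw [e2] at this; linarith
            · intro s hs
              have h1 := (hw (j+1) s).2
              rw [hi1 _ _ hs] at h1
              have := (abs_le.1 (hb s hs)).2
              linarith
            · rw [e2]; linarith [hSS.1, hSS.2]
        · simp only [if_neg hj]
          by_cases hj' : j = n
          · simp only [if_pos hj']
            rcases lt_or_ge t (S+τ) with ht' | ht'
            · simp only [if_pos ht']; constructor <;> linarith [habs.1, habs.2]
            · simp only [if_neg (not_lt.2 ht')]
              have h1 := hw 0 (t - τ)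
              rw [lo1 _ _ (by linarith), hi1 _ _ (by linarith), ← hexp] at h1
              rw [hj']; exact h1
          · simp only [if_neg hj']; constructor <;> linarith [habs.1, habs.2]
    · intro w v hwm hw hvm hv hwv j t
      rcases lt_or_ge t S with ht | ht
      · simp only [N, if_pos ht]; exact le_refl _
      simp only [N, if_neg (not_lt.2 ht)]
      by_cases hj : j < n
      · simp only [if_pos hj]
        apply hA3 j hj _ _ (hadm w hwm hw j hj) (hadm v hvm hv j hj) _ t ht
        intro s hs
        rw [H1 _ _ _ hs, H1 _ _ _ hs]
        have h1 := hrange w hw (j+1) s hs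
        have h2 := hrange v hv (j+1) s hs
        exact hGm j hj s hs ⟨by linarith, by linarith⟩ ⟨by linarith, by linarith⟩ (hwv _ _)
      · simp only [if_neg hj]
        by_cases hj' : j = n
        · simp only [if_pos hj']
          split_ifs
          · exact le_refl _
          · exact hwv _ _
        · simp only [if_neg hj']; exact le_refl _
    · intro w v hwm hw hvm hv hlim j t
      rcases lt_or_ge t S with ht | ht
      · simp only [N, if_pos ht]; exact tendsto_const_nhds
      simp only [N, if_neg (not_lt.2 ht)]
      by_cases hj : j < n
      · simp only [if_pos hj]
        apply hA4 j hj _ _ (fun k => hadm (w k) (hwm k) (hw k) j hj)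
        intro s
        rcases lt_or_ge s S with hs | hs
        · simp only [H, if_pos hs]; exact tendsto_const_nhds
        simp only [H, if_neg (not_lt.2 hs)]
        have hc : Continuous (G j s) := (hGc j hj).comp (by fun_prop : Continuous fun y : ℝ => (s, y))
        exact (hc.tendsto _).comp (hlim (j+1) s)
      · simp only [if_neg hj]
        by_cases hj' : j = n
        · simp only [if_pos hj']
          split_ifs
          · exact tendsto_const_nhds
          · exact hlim _ _
        · simp only [if_neg hj']; exact tendsto_const_nhds
  obtain ⟨w, hwm, hw, hfix⟩ := key
  have hwA : ∀ j < n, ∀ t, S ≤ t → w j t = A j (H w j) t := by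
    intro j hj t ht
    conv_lhs => rw [← hfix]
    simp only [N, if_neg (not_lt.2 ht), if_pos hj]
  have hwn : ∀ t, S + τ ≤ t → w n t = w 0 (t - τ) := by
    intro t ht
    conv_lhs => rw [← hfix]
    simp only [N, if_neg (not_lt.2 ht), if_neg (lt_irrefl n),
      if_neg (not_lt.2 (by linarith : S ≤ t)), if_true]
  have hcA : ∀ j < n, Continuous (A j (H w j)) := fun j hj => hA1 j hj _ (hadm w hwm hw j hj)
  have hev : ∀ j < n, ∀ t, S < t → w j =ᶠ[𝓝 t] A j (H w j) := by
    intro j hj t ht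
    filter_upwards [lt_mem_nhds ht] with s hs using hwA j hj s hs.le
  have hcw : ∀ j < n, ∀ t, S < t → ContinuousAt (w j) t := fun j hj t ht =>
    (hcA j hj).continuousAt.congr (hev j hj t ht).symm
  refine ⟨w, fun j hj => (hcA j hj).continuousOn.congr (fun t ht => hwA j hj t ht),
    fun j hj t ht => (hrange w hw j t ht).1, ?_⟩
  intro t ht j hj
  have hSt : S < t := by linarith
  have hc : ContinuousAt (w (j+1)) t ∧
      w (j+1) t = (if j + 1 < n then w (j+1) t else w 0 (t - τ)) := by
    by_cases hj1 : j + 1 < n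
    · exact ⟨hcw _ hj1 t hSt, by rw [if_pos hj1]⟩
    · have : j + 1 = n := by omega
      rw [if_neg hj1, this]
      refine ⟨?_, hwn t ht.le⟩
      have h1 : ContinuousAt (fun s => w 0 (s - τ)) t :=
        ContinuousAt.comp (g := w 0) (f := fun s => s - τ) (hcw 0 hn _ (by linarith))
          (by fun_prop)
      refine h1.congr ?_
      filter_upwards [lt_mem_nhds ht] with s hs using (hwn s hs.le).symm
  have hcH : ContinuousAt (H w j) t := by
    have h1 : ContinuousAt (fun s => G j s (w (j+1) s)) t :=
      ContinuousAt.comp (g := fun p : ℝ × ℝ => G j p.1 p.2) (f := fun s => (s, w (j+1) s))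
        (hGc j hj).continuousAt (continuousAt_id.prodMk hc.1)
    refine h1.congr ?_
    filter_upwards [lt_mem_nhds hSt] with s hs using (H1 w j s hs.le).symm
  have hD := hA2 j hj _ t (hadm w hwm hw j hj) hcH
  rw [← hc.2, ← H1 w j t hSt.le, hwA j hj t hSt.le]
  exact hD.congr_of_eventuallyEq (hev j hj t hSt)

lemma cyc_affine (n : ℕ) (p : ℕ → ℝ) (E : ℝ) (hne : ∏ j ∈ Finset.range n, p j ≠ E) :
    ∃ (a : ℕ → ℝ) (C : ℝ), (∀ j < n, a (j+1) = p j * a j - 1) ∧ a n = a 0 * E ∧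
      ∀ j, |a j| ≤ C := by
  let u : ℝ → ℕ → ℝ := fun x j => Nat.rec x (fun j y => p j * y - 1) j
  have u0 : ∀ x, u x 0 = x := fun x => rfl
  have us : ∀ x j, u x (j+1) = p j * u x j - 1 := fun x j => rfl
  have hu : ∀ x k, u x k = (∏ j ∈ Finset.range k, p j) * x + u 0 k := by
    intro x k
    induction k with
    | zero => simp [u0]
    | succ k ih => rw [us, us, ih, Finset.prod_range_succ]; ring
  let x := u 0 n / (E - ∏ j ∈ Finset.range n, p j)
  have hx : x * (E - ∏ j ∈ Finset.range n, p j) = u 0 n :=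
    div_mul_cancel₀ _ (sub_ne_zero.2 hne.symm)
  refine ⟨fun j => if j ≤ n then u x j else 0, ∑ j ∈ Finset.range (n+1), |u x j|, ?_, ?_, ?_⟩
  · intro j hj
    simp only [if_pos hj.le, if_pos (show j + 1 ≤ n from hj)]
    exact us x j
  · simp only [le_refl, if_true, Nat.zero_le, u0]
    rw [hu, ← hx]; ring
  · intro j
    by_cases hj : j ≤ n
    · simp only [if_pos hj]
      exact Finset.single_le_sum (f := fun j => |u x j|) (fun i _ => abs_nonneg _)
        (Finset.mem_range.2 (by omega))
    · simp only [if_neg hj, abs_zero]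
      exact Finset.sum_nonneg fun i _ => abs_nonneg _

lemma cyc_feedback (f : ℝ → ℝ) (hf : Continuous f) (hp : ∀ y : ℝ, y ≠ 0 → 0 < y * f y)
    (hdiff : DifferentiableAt ℝ f 0) (hd : deriv f 0 ≠ 0) : f 0 = 0 ∧ 0 < deriv f 0 := by
  have h0 : f 0 = 0 := by
    apply le_antisymm
    · have h1 : Tendsto f (𝓝[<] 0) (𝓝 (f 0)) := hf.continuousAt.tendsto.mono_left nhdsWithin_le_nhds
      refine le_of_tendsto h1 ?_
      filter_upwards [self_mem_nhdsWithin] with y hy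
      have hy : y < 0 := hy
      have := hp y hy.ne
      nlinarith
    · have h1 : Tendsto f (𝓝[>] 0) (𝓝 (f 0)) := hf.continuousAt.tendsto.mono_left nhdsWithin_le_nhds
      refine ge_of_tendsto h1 ?_
      filter_upwards [self_mem_nhdsWithin] with y hy
      have hy : 0 < y := hy
      have := hp y hy.ne'
      nlinarith
  refine ⟨h0, lt_of_le_of_ne ?_ hd.symm⟩
  have h1 := hasDerivAt_iff_tendsto_slope.1 hdiff.hasDerivAt
  refine ge_of_tendsto h1 ?_
  filter_upwards [self_mem_nhdsWithin] with y hy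
  have := hp y hy
  have hy2 : y ≠ 0 := hy
  rw [slope_def_field, h0, sub_zero, sub_zero]
  have e : f y / y = (y * f y) / y ^ 2 := by field_simp
  rw [e]
  positivity

lemma cyc_exp_tendsto (k : ℝ) (hk : k < 0) : Tendsto (fun t => Real.exp (k * t)) atTop (𝓝 0) :=
  Real.tendsto_exp_atBot.comp (tendsto_id.const_mul_atTop_of_neg hk)

theorem exists_nonoscillating_solution_of_real_root
    (n : ℕ) (hn : 0 < n) (lam : ℕ → ℝ) (hlam : ∀ j < n, 0 < lam j)
    (τ : ℝ) (hτ : 0 < τ) (f : ℕ → ℝ → ℝ) (hf : ∀ j < n, Continuous (f j))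
    (hpos : ∀ j < n - 1, ∀ y : ℝ, y ≠ 0 → 0 < y * f j y)
    (hneg : ∀ y : ℝ, y ≠ 0 → y * f (n - 1) y < 0)
    (hC2 : ∀ j < n, ContDiffAt ℝ 2 (f j) 0)
    (hderiv0 : ∀ j < n, deriv (f j) 0 ≠ 0)
    (hreal : ∃ z : ℝ,
      (∏ j ∈ Finset.range n, (z + lam j))
        + (-(∏ j ∈ Finset.range n, deriv (f j) 0)) * Real.exp (-τ * z) = 0) :
    ∃ T : ℝ, ∃ x : ℕ → ℝ → ℝ, IsCyclicSolution n lam τ f T x ∧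
      ∀ j < n, ∀ t : ℝ, T ≤ t → x j t ≠ 0 := by
  obtain ⟨z, hz⟩ := hreal
  have hdf : ∀ j < n, DifferentiableAt ℝ (f j) 0 := fun j hj =>
    (hC2 j hj).differentiableAt (by simp)
  have hnegfb : f (n-1) 0 = 0 ∧ deriv (f (n-1)) 0 < 0 := by
    have hl : n - 1 < n := by omega
    have := cyc_feedback (fun y => - f (n-1) y) (hf _ hl).neg
      (fun y hy => by have := hneg y hy; linarith) (hdf _ hl).fun_neg
      (by rw [deriv.fun_neg]; exact neg_ne_zero.2 (hderiv0 _ hl))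
    rw [deriv.fun_neg] at this
    exact ⟨by linarith [this.1], by linarith [this.2]⟩
  have hf0 : ∀ j < n, f j 0 = 0 := by
    intro j hj
    by_cases h : j < n - 1
    · exact (cyc_feedback (f j) (hf j hj) (hpos j h) (hdf j hj) (hderiv0 j hj)).1
    · have : j = n - 1 := by omega
      rw [this]; exact hnegfb.1
  have hprod : ∏ j ∈ Finset.range n, deriv (f j) 0 < 0 := by
    have e : n = (n - 1) + 1 := by omega
    rw [e, Finset.prod_range_succ]
    apply mul_neg_of_pos_of_neg _ hnegfb.2
    apply Finset.prod_pos
    intro j hj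
    have hj := Finset.mem_range.1 hj
    exact (cyc_feedback (f j) (hf j (by omega)) (hpos j hj) (hdf j (by omega))
      (hderiv0 j (by omega))).2
  set d : ℕ → ℝ := fun j => deriv (f j) 0 with hd
  set χ : ℝ → ℝ := fun y => (∏ j ∈ Finset.range n, (y + lam j))
        + (-(∏ j ∈ Finset.range n, d j)) * Real.exp (-τ * y) with hχ
  have hχz : χ z = 0 := hz
  have hχpos : ∀ y, 0 ≤ y → 0 < χ y := by
    intro y hy
    have h1 : 0 < ∏ j ∈ Finset.range n, (y + lam j) :=
      Finset.prod_pos fun j hj => by linarith [hlam j (Finset.mem_range.1 hj)]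
    have h2 : 0 < (-(∏ j ∈ Finset.range n, d j)) * Real.exp (-τ * y) :=
      mul_pos (by linarith) (Real.exp_pos _)
    exact add_pos h1 h2
  have hz0 : z < 0 := by
    by_contra h
    have := hχpos z (not_lt.1 h)
    linarith
  have hmprod : ∏ j ∈ Finset.range n, (z + lam j) =
      (∏ j ∈ Finset.range n, d j) * Real.exp (-τ * z) := by
    have : (∏ j ∈ Finset.range n, (z + lam j))
        + (-(∏ j ∈ Finset.range n, d j)) * Real.exp (-τ * z) = 0 := hz
    linarith
  have hm : ∀ j < n, z + lam j ≠ 0 := by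
    have : ∏ j ∈ Finset.range n, (z + lam j) ≠ 0 := by
      rw [hmprod]; exact mul_ne_zero hprod.ne (Real.exp_pos _).ne'
    intro j hj
    exact Finset.prod_ne_zero_iff.1 this j (Finset.mem_range.2 hj)
  -- choose δ
  have han : AnalyticOnNhd ℝ χ univ := by
    intro y _
    apply AnalyticAt.fun_add
    · apply Finset.analyticAt_fun_prod
      intro j _
      fun_prop
    · fun_prop
  have hχne : ∀ᶠ y in 𝓝[≠] z, χ y ≠ 0 := by
    rcases (han z (mem_univ _)).eventually_eq_zero_or_eventually_ne_zero with h | h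
    · exfalso
      have := han.eqOn_zero_of_preconnected_of_eventuallyEq_zero isPreconnected_univ
        (mem_univ z) h (mem_univ 0)
      exact (hχpos 0 le_rfl).ne' this
    · exact h
  have htend : Tendsto (fun δ : ℝ => z - δ) (𝓝[>] 0) (𝓝[≠] z) := by
    apply tendsto_nhdsWithin_iff.2
    constructor
    · have : Tendsto (fun δ : ℝ => z - δ) (𝓝 0) (𝓝 (z - 0)) := (by fun_prop : Continuous fun δ : ℝ => z - δ).tendsto 0
      rw [sub_zero] at this
      exact this.mono_left nhdsWithin_le_nhds
    · filter_upwards [self_mem_nhdsWithin] with y hy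
      have hy : 0 < y := hy
      have : z - y ≠ z := by intro h; linarith
      exact this
  have hmne : ∀ᶠ δ in 𝓝[>] (0:ℝ), ∀ j ∈ Iio n, z + lam j ≠ δ := by
    rw [eventually_all_finite (finite_Iio n)]
    intro j hj
    have : ∀ᶠ δ in 𝓝 (0:ℝ), δ ≠ z + lam j := isOpen_ne.mem_nhds (hm j hj).symm
    filter_upwards [nhdsWithin_le_nhds this] with δ hδ using hδ.symm
  have hlt : ∀ᶠ δ in 𝓝[>] (0:ℝ), δ < -z := nhdsWithin_le_nhds (gt_mem_nhds (by linarith))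
  obtain ⟨δ, hδχ, hmδ, hδz, hδ⟩ := ((htend.eventually hχne).and
    (hmne.and (hlt.and self_mem_nhdsWithin))).exists
  have hδ : 0 < δ := hδ
  have hmδ : ∀ j < n, z + lam j ≠ δ := hmδ
  -- the affine system
  obtain ⟨a, C, ha, han', haC⟩ := cyc_affine n (fun j => (z + lam j - δ) / (z + lam j))
    (Real.exp (δ * τ)) (by
      intro h
      apply hδχ
      rw [Finset.prod_div_distrib, div_eq_iff (Finset.prod_ne_zero_iff.2
        fun j hj => hm j (Finset.mem_range.1 hj)), hmprod] at h
      have e : ∏ j ∈ Finset.range n, (z - δ + lam j) = ∏ j ∈ Finset.range n, (z + lam j - δ) :=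
        Finset.prod_congr rfl fun j _ => by ring
      simp only [hχ]
      rw [e, h]
      have e2 : Real.exp (-τ * (z - δ)) = Real.exp (δ * τ) * Real.exp (-τ * z) := by
        rw [← Real.exp_add]; ring_nf
      rw [e2]; ring)
  -- coefficients
  let c : ℕ → ℝ := fun j => ∏ i ∈ Finset.range j, ((z + lam i) / d i)
  have hc0 : c 0 = 1 := by simp [c]
  have hcs : ∀ j < n, c (j+1) * d j = c j * (z + lam j) := by
    intro j hj
    have : d j ≠ 0 := hderiv0 j hj
    simp only [c, Finset.prod_range_succ]
    field_simp
  have hcne : ∀ j ≤ n, c j ≠ 0 := by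
    intro j hj
    apply Finset.prod_ne_zero_iff.2
    intro i hi
    have := Finset.mem_range.1 hi
    exact div_ne_zero (hm i (by omega)) (hderiv0 i (by omega))
  have hcn : c n = Real.exp (-τ * z) := by
    simp only [c]
    rw [Finset.prod_div_distrib, hmprod, mul_comm, mul_div_assoc, div_self hprod.ne, mul_one]
  -- local information
  have hloc := fun j (hj : j < n) => cyc_local (f j) (hC2 j hj) (hf0 j hj) (hderiv0 j hj)
  choose! η hη B hB hloc1 hloc2 using hloc
  have hev : ∀ᶠ t in (atTop : Filter ℝ), (∀ j ∈ Iio n, |c (j+1)| * 4 * Real.exp (z * t) ≤ η j ∧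
      (16 * B j / |d j|) * |c (j+1)| * Real.exp ((z + δ) * t) ≤ 1) ∧
      C * Real.exp (-δ * t) ≤ 1/2 ∧ Real.exp (-δ * t) ≤ 1/2 := by
    have key : ∀ k K ε : ℝ, k < 0 → 0 < ε → ∀ᶠ t in (atTop : Filter ℝ), K * Real.exp (k * t) ≤ ε := by
      intro k K ε hk hε
      have := (cyc_exp_tendsto k hk).const_mul K
      rw [mul_zero] at this
      exact (this.eventually (gt_mem_nhds hε)).mono fun t ht => ht.le
    refine Eventually.and ?_ ((key _ _ _ (by linarith) (by norm_num)).and ?_)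
    · rw [eventually_all_finite (finite_Iio n)]
      intro j hj
      exact (key _ _ _ hz0 (hη j hj)).and (key _ _ _ (by linarith) (by norm_num))
    · simpa using key (-δ) 1 (1/2) (by linarith) (by norm_num)
  obtain ⟨S, hSall⟩ := eventually_atTop.1 hev
  have hrne : ∀ j < n, ∀ t, c (j+1) * Real.exp (z * t) ≠ 0 := fun j hj t =>
    mul_ne_zero (hcne _ hj) (Real.exp_pos _).ne'
  have hGall : ∀ j < n, ∀ t, S ≤ t → _ := fun j hj t ht =>
    cyc_G (f j) (d j) (η j) (B j) (c (j+1) * Real.exp (z * t)) (hderiv0 j hj) (hrne j hj t)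
      (by rw [abs_mul, Real.abs_exp]; linarith [((hSall t ht).1 j hj).1]) (hB j hj)
      (hloc1 j hj) (hloc2 j hj)
  obtain ⟨w, hwc, hwp, hwd⟩ := cyc_core n hn (fun j => z + lam j) τ δ S a
    (fun j t w => f j (c (j+1) * Real.exp (z * t) * w) / (d j * (c (j+1) * Real.exp (z * t))))
    hτ hδ hm hmδ
    (by
      intro j hj
      have h1 := ha j hj
      have h2 := hm j hj
      have h3 : z + lam j - δ ≠ 0 := sub_ne_zero.2 (hmδ j hj)
      rw [h1]
      field_simp
      ring)
    han'
    (by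
      intro j t ht
      rw [abs_mul, Real.abs_exp]
      exact (mul_le_mul_of_nonneg_right (haC j) (Real.exp_pos _).le).trans (hSall t ht).2.1)
    (fun t ht => (hSall t ht).2.2)
    (fun j hj t ht => (hGall j hj t ht).1)
    (by
      intro j hj t ht w hw
      refine ((hGall j hj t ht).2 w hw).trans ?_
      have h1 := ((hSall t ht).1 j hj).2
      have e : Real.exp (z * t) = Real.exp ((z + δ) * t) * Real.exp (-δ * t) := by
        rw [← Real.exp_add]; ring_nf
      rw [abs_mul, Real.abs_exp, e]
      have := mul_le_mul_of_nonneg_right h1 (Real.exp_pos (-δ * t)).le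
      linarith)
    (by
      intro j hj
      apply Continuous.div
      · exact (hf j hj).comp (by fun_prop)
      · fun_prop
      · intro p
        exact mul_ne_zero (hderiv0 j hj) (hrne j hj p.1))
  have hx : ∀ t, S + τ < t → ∀ j < n, HasDerivAt (fun t => c j * Real.exp (z * t) * w j t)
      (-lam j * (c j * Real.exp (z * t) * w j t) +
        f j (c (j+1) * Real.exp (z * t) * (if j + 1 < n then w (j+1) t else w 0 (t - τ)))) t := by
    intro t ht j hj
    have h1 : HasDerivAt (fun t => c j * Real.exp (z * t)) (c j * (Real.exp (z * t) * z)) t := by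
      have := (((hasDerivAt_id t).const_mul z).exp).const_mul (c j)
      simpa using this
    refine (h1.mul (hwd t ht j hj)).congr_deriv ?_
    have e : d j * (c (j+1) * Real.exp (z * t)) = c j * Real.exp (z * t) * (z + lam j) := by
      linear_combination Real.exp (z * t) * hcs j hj
    rw [e]
    have h2 := hcne j hj.le
    have h3 := hm j hj
    have h4 := (Real.exp_pos (z * t)).ne'
    field_simp
    ring
  refine ⟨S + τ, fun j t => c j * Real.exp (z * t) * w j t, ⟨?_, ?_, ?_⟩, ?_⟩
  · rw [add_sub_cancel_right]
    exact (by fun_prop : Continuous fun t => c 0 * Real.exp (z * t)).continuousOn.mul (hwc 0 hn)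
  · intro j hj
    exact (by fun_prop : Continuous fun t => c j * Real.exp (z * t)).continuousOn.mul
      ((hwc j hj).mono (Ici_subset_Ici.2 (by linarith)))
  · intro t ht
    constructor
    · intro j hj
      have := hx t ht j (by omega)
      rwa [if_pos hj] at this
    · have := hx t ht (n-1) (by omega)
      have e : n - 1 + 1 = n := by omega
      rw [e, if_neg (lt_irrefl n), hcn] at this
      have e2 : c 0 * Real.exp (z * (t - τ)) = Real.exp (-τ * z) * Real.exp (z * t) := by
        rw [hc0, one_mul, ← Real.exp_add]; ring_nf
      simp only [e2]
      exact this
  · intro j hj t ht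
    have := hwp j hj t (by linarith)
    exact mul_ne_zero (mul_ne_zero (hcne j hj.le) (Real.exp_pos _).ne') (by linarith)
end
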